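/- Let K be a commutative semiring with 0 ≠ 1 and let S : Δ* → K be an algebraic formal power series. Then there exists a first-order sentence φ ∈ sRFO(K) over nested words such that S = ⟦∃ν.φ⟧^nest, i.e. (S, w) = ∑_{ν ∈ Nest_{|w|}} (⟦φ⟧, (w,ν)) for all w ∈ Δ*. -/

import Mathlib

/-! ### Nested words and weighted nested word automata -/

/-- A nesting relation of width `n` (positions `1,…,n`). -/
def IsNestingRel (n : ℕ) (ν : ℕ → ℕ → Prop) : Prop :=
  (∀ i j, ν i j → 1 ≤ i ∧ i < j ∧ j ≤ n) ∧
  (∀ i j j', ν i j → ν i j' → j = j') ∧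
  (∀ i i' j, ν i j → ν i' j → i = i') ∧
  (∀ i j i' j', ν i j → ν i' j' → i < i' → j < i' ∨ j' < j)

/-- A nested word over `Δ`: a nonempty word together with a nesting relation. -/
structure NestedWord (Δ : Type) : Type where
  word : List Δ
  ne : word ≠ []
  rel : ℕ → ℕ → Prop
  isNest : IsNestingRel word.length rel

namespace NestedWord

variable {Δ : Type} (nw : NestedWord Δ)

/-- The length of the nested word. -/
def len : ℕ := nw.word.length

/-- The letter at (1-based) position `j`. -/
def letter (j : ℕ) : Δ := nw.word.getD (j - 1) (nw.word.head nw.ne)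

def IsCall (j : ℕ) : Prop := ∃ i, nw.rel j i
def IsReturn (j : ℕ) : Prop := ∃ i, nw.rel i j
def IsInternal (j : ℕ) : Prop :=
  1 ≤ j ∧ j ≤ nw.len ∧ ¬ nw.IsCall j ∧ ¬ nw.IsReturn j

/-- The nesting depth of position `k`: the number of arches open at `k`. -/
noncomputable def depth (k : ℕ) : ℕ :=
  Set.ncard {p : ℕ × ℕ | nw.rel p.1 p.2 ∧ p.1 ≤ k ∧ k ≤ p.2}

end NestedWord

/-- Clamp a function on `Fin (n+1)` to a function on `ℕ`. -/
def clampFun {Q : Type} {n : ℕ} (r : Fin (n + 1) → Q) : ℕ → Q :=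
  fun k => r ⟨min k n, Nat.lt_succ_of_le (min_le_right _ _)⟩

/-- A weighted nested word automaton over the commutative semiring `K`. -/
structure WNWA (K Δ : Type) [CommSemiring K] : Type 1 where
  Q : Type
  [fintQ : Fintype Q]
  ι : Q → K
  δcall : Q → Δ → Q → K
  δint : Q → Δ → Q → K
  δret : Q → Q → Δ → Q → K
  κ : Q → K

attribute [instance] WNWA.fintQ

namespace WNWA

variable {K Δ : Type} [CommSemiring K]

open Classical in
/-- The weight contributed by position `j` in a run `ρ`. -/
noncomputable def posWeight (A : WNWA K Δ) (nw : NestedWord Δ) (ρ : ℕ → A.Q) (j : ℕ) : K :=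
  if nw.IsCall j then A.δcall (ρ (j - 1)) (nw.letter j) (ρ j)
  else if h : nw.IsReturn j then
    A.δret (ρ (j - 1)) (ρ (h.choose - 1)) (nw.letter j) (ρ j)
  else A.δint (ρ (j - 1)) (nw.letter j) (ρ j)

/-- The weight of a run. -/
noncomputable def runWeight (A : WNWA K Δ) (nw : NestedWord Δ) (ρ : ℕ → A.Q) : K :=
  ∏ j ∈ Finset.Icc 1 nw.len, A.posWeight nw ρ j

/-- The behavior of a weighted nested word automaton. -/
noncomputable def behavior (A : WNWA K Δ) (nw : NestedWord Δ) : K :=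
  ∑ r : Fin (nw.len + 1) → A.Q,
    A.ι (r 0) * A.runWeight nw (clampFun r) * A.κ (r (Fin.last _))

end WNWA

/-- A nested word series is regular if it is the behavior of some WNWA. -/
def NWRegular {K Δ : Type} [CommSemiring K] (S : NestedWord Δ → K) : Prop :=
  ∃ A : WNWA K Δ, ∀ nw, A.behavior nw = S nw
/-! ### Weighted MSO logic over nested words -/

/-- Weighted MSO formulae over nested words: constants from `K`, atomic formulae
and their negations, closed under `∨`, `∧`, and the four quantifiers. -/
inductive WMSO (K Δ : Type) : Type where
  | const : K → WMSO K Δ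
  | eqv : ℕ → ℕ → WMSO K Δ
  | lab : Δ → ℕ → WMSO K Δ
  | lev : ℕ → ℕ → WMSO K Δ
  | nuv : ℕ → ℕ → WMSO K Δ
  | mem : ℕ → ℕ → WMSO K Δ
  | neq : ℕ → ℕ → WMSO K Δ
  | nlab : Δ → ℕ → WMSO K Δ
  | nle : ℕ → ℕ → WMSO K Δ
  | nnu : ℕ → ℕ → WMSO K Δ
  | nmem : ℕ → ℕ → WMSO K Δ
  | or : WMSO K Δ → WMSO K Δ → WMSO K Δ
  | and : WMSO K Δ → WMSO K Δ → WMSO K Δ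
  | exF : ℕ → WMSO K Δ → WMSO K Δ
  | exS : ℕ → WMSO K Δ → WMSO K Δ
  | alF : ℕ → WMSO K Δ → WMSO K Δ
  | alS : ℕ → WMSO K Δ → WMSO K Δ

namespace WMSO

variable {K Δ : Type} [CommSemiring K]

open Classical in
/-- Weighted semantics: `∨ ↦ +`, `∧ ↦ ·`, `∃ ↦ Σ`, `∀ ↦ Π`. -/
noncomputable def sem (nw : NestedWord Δ) :
    WMSO K Δ → (ℕ → ℕ) → (ℕ → Finset ℕ) → K
  | .const k, _, _ => k
  | .eqv x y, γ1, _ => if γ1 x = γ1 y then 1 else 0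
  | .lab a x, γ1, _ => if nw.letter (γ1 x) = a then 1 else 0
  | .lev x y, γ1, _ => if γ1 x ≤ γ1 y then 1 else 0
  | .nuv x y, γ1, _ => if nw.rel (γ1 x) (γ1 y) then 1 else 0
  | .mem x X, γ1, γ2 => if γ1 x ∈ γ2 X then 1 else 0
  | .neq x y, γ1, _ => if γ1 x = γ1 y then 0 else 1
  | .nlab a x, γ1, _ => if nw.letter (γ1 x) = a then 0 else 1
  | .nle x y, γ1, _ => if γ1 x ≤ γ1 y then 0 else 1
  | .nnu x y, γ1, _ => if nw.rel (γ1 x) (γ1 y) then 0 else 1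
  | .nmem x X, γ1, γ2 => if γ1 x ∈ γ2 X then 0 else 1
  | .or φ ψ, γ1, γ2 => sem nw φ γ1 γ2 + sem nw ψ γ1 γ2
  | .and φ ψ, γ1, γ2 => sem nw φ γ1 γ2 * sem nw ψ γ1 γ2
  | .exF x φ, γ1, γ2 =>
      ∑ i ∈ Finset.Icc 1 nw.len, sem nw φ (Function.update γ1 x i) γ2
  | .exS X φ, γ1, γ2 =>
      ∑ T ∈ (Finset.Icc 1 nw.len).powerset, sem nw φ γ1 (Function.update γ2 X T)
  | .alF x φ, γ1, γ2 =>
      ∏ i ∈ Finset.Icc 1 nw.len, sem nw φ (Function.update γ1 x i) γ2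
  | .alS X φ, γ1, γ2 =>
      ∏ T ∈ (Finset.Icc 1 nw.len).powerset, sem nw φ γ1 (Function.update γ2 X T)

/-- Free first-order variables. -/
def freeF : WMSO K Δ → Finset ℕ
  | .const _ => ∅
  | .eqv x y => {x, y}
  | .lab _ x => {x}
  | .lev x y => {x, y}
  | .nuv x y => {x, y}
  | .mem x _ => {x}
  | .neq x y => {x, y}
  | .nlab _ x => {x}
  | .nle x y => {x, y}
  | .nnu x y => {x, y}
  | .nmem x _ => {x}
  | .or φ ψ => φ.freeF ∪ ψ.freeF
  | .and φ ψ => φ.freeF ∪ ψ.freeF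
  | .exF x φ => φ.freeF.erase x
  | .exS _ φ => φ.freeF
  | .alF x φ => φ.freeF.erase x
  | .alS _ φ => φ.freeF

/-- Free second-order variables. -/
def freeS : WMSO K Δ → Finset ℕ
  | .mem _ X => {X}
  | .nmem _ X => {X}
  | .or φ ψ => φ.freeS ∪ ψ.freeS
  | .and φ ψ => φ.freeS ∪ ψ.freeS
  | .exF _ φ => φ.freeS
  | .alF _ φ => φ.freeS
  | .exS X φ => φ.freeS.erase X
  | .alS X φ => φ.freeS.erase X
  | _ => ∅

/-- Sentences: no free variables. -/
def Sentence (φ : WMSO K Δ) : Prop := φ.freeF = ∅ ∧ φ.freeS = ∅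

end WMSO

/-! ### Classical MSO over nested words and syntactically unambiguous formulae -/

/-- Classical MSO formulae over nested words. -/
inductive MSOF (Δ : Type) : Type where
  | eqv : ℕ → ℕ → MSOF Δ
  | lab : Δ → ℕ → MSOF Δ
  | lev : ℕ → ℕ → MSOF Δ
  | nuv : ℕ → ℕ → MSOF Δ
  | mem : ℕ → ℕ → MSOF Δ
  | not : MSOF Δ → MSOF Δ
  | or : MSOF Δ → MSOF Δ → MSOF Δ
  | and : MSOF Δ → MSOF Δ → MSOF Δ
  | exF : ℕ → MSOF Δ → MSOF Δ
  | exS : ℕ → MSOF Δ → MSOF Δ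
  | alF : ℕ → MSOF Δ → MSOF Δ
  | alS : ℕ → MSOF Δ → MSOF Δ

namespace MSOF

variable {Δ : Type}

/-- Substitution of first-order variable `x` by `y` (capture cannot occur for fresh `y`). -/
def substF (x y : ℕ) : MSOF Δ → MSOF Δ
  | eqv u v => eqv (if u = x then y else u) (if v = x then y else v)
  | lab a u => lab a (if u = x then y else u)
  | lev u v => lev (if u = x then y else u) (if v = x then y else v)
  | nuv u v => nuv (if u = x then y else u) (if v = x then y else v)
  | mem u X => mem (if u = x then y else u) X
  | not φ => not (substF x y φ)
  | or φ ψ => or (substF x y φ) (substF x y ψ)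
  | and φ ψ => and (substF x y φ) (substF x y ψ)
  | exF z φ => if z = x then exF z φ else exF z (substF x y φ)
  | exS Z φ => exS Z (substF x y φ)
  | alF z φ => if z = x then alF z φ else alF z (substF x y φ)
  | alS Z φ => alS Z (substF x y φ)

/-- Substitution of second-order variable `X` by `Y`. -/
def substS (X Y : ℕ) : MSOF Δ → MSOF Δ
  | mem u Z => mem u (if Z = X then Y else Z)
  | not φ => not (substS X Y φ)
  | or φ ψ => or (substS X Y φ) (substS X Y ψ)
  | and φ ψ => and (substS X Y φ) (substS X Y ψ)
  | exF z φ => exF z (substS X Y φ)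
  | exS Z φ => if Z = X then exS Z φ else exS Z (substS X Y φ)
  | alF z φ => alF z (substS X Y φ)
  | alS Z φ => if Z = X then alS Z φ else alS Z (substS X Y φ)
  | φ => φ

/-- Largest first-order variable occurring (free or bound). -/
def maxF : MSOF Δ → ℕ
  | eqv u v => max u v
  | lab _ u => u
  | lev u v => max u v
  | nuv u v => max u v
  | mem u _ => u
  | not φ => φ.maxF
  | or φ ψ => max φ.maxF ψ.maxF
  | and φ ψ => max φ.maxF ψ.maxF
  | exF z φ => max z φ.maxF
  | exS _ φ => φ.maxF
  | alF z φ => max z φ.maxF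
  | alS _ φ => φ.maxF

/-- Largest second-order variable occurring (free or bound). -/
def maxS : MSOF Δ → ℕ
  | mem _ X => X
  | not φ => φ.maxS
  | or φ ψ => max φ.maxS ψ.maxS
  | and φ ψ => max φ.maxS ψ.maxS
  | exF _ φ => φ.maxS
  | exS Z φ => max Z φ.maxS
  | alF _ φ => φ.maxS
  | alS Z φ => max Z φ.maxS
  | _ => 0

end MSOF

/-- The lexicographic (strict) order `Y < X` on sets, used to disambiguate set
quantification: `∃y. y ∈ X ∧ ¬ y ∈ Y ∧ ∀z. (z < y → (z ∈ Y ↔ z ∈ X))`,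
where `y` and `z` are the first-order variables `0` and `1`. -/
def lessSet {Δ : Type} (Y X : ℕ) : MSOF Δ :=
  .exF 0 (.and (.mem 0 X) (.and (.not (.mem 0 Y))
    (.alF 1 (.or (.lev 0 1)
      (.and (.or (.not (.mem 1 Y)) (.mem 1 X)) (.or (.not (.mem 1 X)) (.mem 1 Y)))))))

mutual
  /-- `PlusOf K ψ φ` : `φ = ψ⁺`, the positive syntactically unambiguous weighted
  version of the classical formula `ψ`. -/
  inductive PlusOf (K : Type) {Δ : Type} : MSOF Δ → WMSO K Δ → Prop where
    | eqv : ∀ x y, PlusOf K (.eqv x y) (.eqv x y)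
    | lab : ∀ (a : Δ) x, PlusOf K (.lab a x) (.lab a x)
    | lev : ∀ x y, PlusOf K (.lev x y) (.lev x y)
    | nuv : ∀ x y, PlusOf K (.nuv x y) (.nuv x y)
    | mem : ∀ x X, PlusOf K (.mem x X) (.mem x X)
    | not : ∀ {ψ : MSOF Δ} {χ}, MinusOf K ψ χ → PlusOf K (.not ψ) χ
    | or : ∀ {ψ₁ ψ₂ : MSOF Δ} {a b c}, PlusOf K ψ₁ a → MinusOf K ψ₁ b → PlusOf K ψ₂ c →
        PlusOf K (.or ψ₁ ψ₂) (.or a (.and b c))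
    | and : ∀ {ψ₁ ψ₂ : MSOF Δ} {a b}, PlusOf K ψ₁ a → PlusOf K ψ₂ b →
        PlusOf K (.and ψ₁ ψ₂) (.and a b)
    | exF : ∀ {x : ℕ} {ψ : MSOF Δ} {a χ} (y : ℕ), y = (MSOF.exF x ψ).maxF + 1 →
        PlusOf K ψ a →
        MinusOf K (.and (.not (.lev x y)) (ψ.substF x y)) χ →
        PlusOf K (.exF x ψ) (.exF x (.and a (.alF y χ)))
    | alF : ∀ {x : ℕ} {ψ : MSOF Δ} {a}, PlusOf K ψ a → PlusOf K (.alF x ψ) (.alF x a)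
    | exS : ∀ {X : ℕ} {ψ : MSOF Δ} {a χ} (Y : ℕ), Y = (MSOF.exS X ψ).maxS + 1 →
        PlusOf K ψ a →
        MinusOf K (.and (lessSet Y X) (ψ.substS X Y)) χ →
        PlusOf K (.exS X ψ) (.exS X (.and a (.alS Y χ)))
    | alS : ∀ {X : ℕ} {ψ : MSOF Δ} {a}, PlusOf K ψ a → PlusOf K (.alS X ψ) (.alS X a)

  /-- `MinusOf K ψ φ` : `φ = ψ⁻`. -/
  inductive MinusOf (K : Type) {Δ : Type} : MSOF Δ → WMSO K Δ → Prop where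
    | eqv : ∀ x y, MinusOf K (.eqv x y) (.neq x y)
    | lab : ∀ (a : Δ) x, MinusOf K (.lab a x) (.nlab a x)
    | lev : ∀ x y, MinusOf K (.lev x y) (.nle x y)
    | nuv : ∀ x y, MinusOf K (.nuv x y) (.nnu x y)
    | mem : ∀ x X, MinusOf K (.mem x X) (.nmem x X)
    | not : ∀ {ψ : MSOF Δ} {χ}, PlusOf K ψ χ → MinusOf K (.not ψ) χ
    | or : ∀ {ψ₁ ψ₂ : MSOF Δ} {a b}, MinusOf K ψ₁ a → MinusOf K ψ₂ b →
        MinusOf K (.or ψ₁ ψ₂) (.and a b)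
    | and : ∀ {ψ₁ ψ₂ : MSOF Δ} {a b c}, MinusOf K ψ₁ a → PlusOf K ψ₁ b → MinusOf K ψ₂ c →
        MinusOf K (.and ψ₁ ψ₂) (.or a (.and b c))
    | exF : ∀ {x : ℕ} {ψ : MSOF Δ} {a}, MinusOf K ψ a → MinusOf K (.exF x ψ) (.alF x a)
    | alF : ∀ {x : ℕ} {ψ : MSOF Δ} {a χ} (y : ℕ), y = (MSOF.alF x ψ).maxF + 1 →
        MinusOf K ψ a →
        MinusOf K (.and (.not (.lev x y)) (.not (ψ.substF x y))) χ →
        MinusOf K (.alF x ψ) (.exF x (.and a (.alF y χ)))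
    | exS : ∀ {X : ℕ} {ψ : MSOF Δ} {a}, MinusOf K ψ a → MinusOf K (.exS X ψ) (.alS X a)
    | alS : ∀ {X : ℕ} {ψ : MSOF Δ} {a χ} (Y : ℕ), Y = (MSOF.alS X ψ).maxS + 1 →
        MinusOf K ψ a →
        MinusOf K (.and (lessSet Y X) (.not (ψ.substS X Y))) χ →
        MinusOf K (.alS X ψ) (.exS X (.and a (.alS Y χ)))
end

/-- A weighted formula is syntactically unambiguous if it is of the form `ψ⁺` or
`ψ⁻` for a classical formula `ψ`. -/
def SyntUnamb {K Δ : Type} (φ : WMSO K Δ) : Prop :=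
  ∃ ψ : MSOF Δ, PlusOf K ψ φ ∨ MinusOf K ψ φ

/-- Almost unambiguous formulae: the smallest class containing all constants and
all syntactically unambiguous formulae which is closed under `∧` and `∨`. -/
inductive AUMSO {K Δ : Type} : WMSO K Δ → Prop where
  | const (k : K) : AUMSO (.const k)
  | unamb {φ : WMSO K Δ} : SyntUnamb φ → AUMSO φ
  | and {φ ψ : WMSO K Δ} : AUMSO φ → AUMSO ψ → AUMSO (.and φ ψ)
  | or {φ ψ : WMSO K Δ} : AUMSO φ → AUMSO ψ → AUMSO (.or φ ψ)

/-- Weakly unambiguous formulae: additionally closed under existential quantification. -/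
inductive WUMSO {K Δ : Type} : WMSO K Δ → Prop where
  | const (k : K) : WUMSO (.const k)
  | unamb {φ : WMSO K Δ} : SyntUnamb φ → WUMSO φ
  | and {φ ψ : WMSO K Δ} : WUMSO φ → WUMSO ψ → WUMSO (.and φ ψ)
  | or {φ ψ : WMSO K Δ} : WUMSO φ → WUMSO ψ → WUMSO (.or φ ψ)
  | exF {x : ℕ} {φ : WMSO K Δ} : WUMSO φ → WUMSO (.exF x φ)
  | exS {X : ℕ} {φ : WMSO K Δ} : WUMSO φ → WUMSO (.exS X φ)

/-- Syntactically restricted MSO: every subformula `∀X.ψ` has `ψ` syntactically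
unambiguous and every subformula `∀x.ψ` has `ψ` almost unambiguous. -/
def SRMSO {K Δ : Type} : WMSO K Δ → Prop
  | .or φ ψ => SRMSO φ ∧ SRMSO ψ
  | .and φ ψ => SRMSO φ ∧ SRMSO ψ
  | .exF _ φ => SRMSO φ
  | .exS _ φ => SRMSO φ
  | .alF _ φ => AUMSO φ ∧ SRMSO φ
  | .alS _ φ => SyntUnamb φ ∧ SRMSO φ
  | _ => True

/-- Syntactically weakly restricted MSO. -/
def SWRMSO {K Δ : Type} : WMSO K Δ → Prop
  | .or φ ψ => SWRMSO φ ∧ SWRMSO ψ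
  | .and φ ψ => SWRMSO φ ∧ SWRMSO ψ
  | .exF _ φ => SWRMSO φ
  | .exS _ φ => SWRMSO φ
  | .alF _ φ => WUMSO φ ∧ SWRMSO φ
  | .alS _ φ => SyntUnamb φ ∧ SWRMSO φ
  | _ => True

/-- Formulae without set quantification. -/
def NoSetQuant {K Δ : Type} : WMSO K Δ → Prop
  | .or φ ψ => NoSetQuant φ ∧ NoSetQuant ψ
  | .and φ ψ => NoSetQuant φ ∧ NoSetQuant ψ
  | .exF _ φ => NoSetQuant φ
  | .alF _ φ => NoSetQuant φ
  | .exS _ _ => False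
  | .alS _ _ => False
  | _ => True

/-- First-order fragment of `SRMSO`. -/
def SRFO {K Δ : Type} (φ : WMSO K Δ) : Prop := SRMSO φ ∧ NoSetQuant φ

/-- `∃X₁.…∃Xₘ.ψ` with `ψ ∈ sRFO(K)`. -/
inductive SREMSO {K Δ : Type} : WMSO K Δ → Prop where
  | base {φ : WMSO K Δ} : SRFO φ → SREMSO φ
  | exS {X : ℕ} {φ : WMSO K Δ} : SREMSO φ → SREMSO (.exS X φ)

/-- A nested word series is `Z`-definable if it is the semantics of a sentence in `Z`. -/
def NWDefinable {K Δ : Type} [CommSemiring K] (Z : WMSO K Δ → Prop)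
    (S : NestedWord Δ → K) : Prop :=
  ∃ φ : WMSO K Δ, Z φ ∧ φ.Sentence ∧ ∀ nw γ1 γ2, φ.sem nw γ1 γ2 = S nw
/-! ### Algebraic formal power series -/

section Algebraic

variable {K Δ : Type} [CommSemiring K]

open Classical in
/-- Given a family of series `(S_X)` and a word `u ∈ (Δ ∪ 𝒳)*`, the series
`u₁ S_{X₁} u₂ ⋯ u_k S_{X_k} u_{k+1}` obtained by substituting `S_X` for each
variable `X` in `u` and taking Cauchy products. -/
noncomputable def wordSeries {X : Type} (S : X → List Δ → K) :
    List (Δ ⊕ X) → List Δ → K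
  | [] => fun w => if w = [] then 1 else 0
  | (Sum.inl a) :: rest => fun w =>
      match w with
      | [] => 0
      | b :: w' => if b = a then wordSeries S rest w' else 0
  | (Sum.inr x) :: rest => fun w =>
      ∑ k ∈ Finset.range (w.length + 1),
        S x (w.take k) * wordSeries S rest (w.drop k)

/-- `(S_X)` is a solution of the algebraic system `(P_X)`. -/
def IsSolution {X : Type} (P : X → List (Δ ⊕ X) → K) (S : X → List Δ → K) : Prop :=
  ∀ x w, S x w = ∑ᶠ u : List (Δ ⊕ X), P x u * wordSeries S u w

/-- A proper algebraic system: `(P_X, Y) = (P_X, ε) = 0` for all variables `X, Y`. -/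
def IsProper {X : Type} (P : X → List (Δ ⊕ X) → K) : Prop :=
  ∀ x, P x [] = 0 ∧ ∀ y : X, P x [Sum.inr y] = 0

/-- `S : Δ* → K` is an algebraic formal power series: a component of the
(unique) quasiregular solution of a proper algebraic system with finitely
supported polynomials. -/
def IsAlgebraicSeries (K Δ : Type) [CommSemiring K] (S : List Δ → K) : Prop :=
  ∃ (X : Type) (_ : Fintype X) (P : X → List (Δ ⊕ X) → K) (Sol : X → List Δ → K),
    (∀ x, (Function.support (P x)).Finite) ∧
    IsProper P ∧ IsSolution P Sol ∧ (∀ x, Sol x [] = 0) ∧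
    ∃ x₀, ∀ w, S w = Sol x₀ w

end Algebraic
/-- The formal power series `⟦∃ν.φ⟧^nest : Δ* → K`:
`(⟦∃ν.φ⟧^nest, w) = ∑_{ν ∈ Nest_{|w|}} (⟦φ⟧, (w,ν))`. -/
noncomputable def existsNuSem {K Δ : Type} [CommSemiring K]
    (φ : WMSO K Δ) : List Δ → K :=
  fun w => ∑ᶠ (nw : NestedWord Δ) (_ : nw.word = w),
    φ.sem nw (fun _ => 1) (fun _ => ∅)

/-! ### Part A: first-order formulae and their unambiguous versions -/

namespace MSOF

variable {Δ : Type}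

/-- First-order formulae. -/
def FO : MSOF Δ → Prop
  | eqv _ _ => True
  | lab _ _ => True
  | lev _ _ => True
  | nuv _ _ => True
  | mem _ _ => False
  | not φ => φ.FO
  | or φ ψ => φ.FO ∧ ψ.FO
  | and φ ψ => φ.FO ∧ ψ.FO
  | exF _ φ => φ.FO
  | exS _ _ => False
  | alF _ φ => φ.FO
  | alS _ _ => False

/-- Classical semantics (first-order part). -/
def Holds (nw : NestedWord Δ) : MSOF Δ → (ℕ → ℕ) → Prop
  | eqv x y, γ => γ x = γ y
  | lab a x, γ => nw.letter (γ x) = a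
  | lev x y, γ => γ x ≤ γ y
  | nuv x y, γ => nw.rel (γ x) (γ y)
  | mem _ _, _ => False
  | not φ, γ => ¬ Holds nw φ γ
  | or φ ψ, γ => Holds nw φ γ ∨ Holds nw ψ γ
  | and φ ψ, γ => Holds nw φ γ ∧ Holds nw ψ γ
  | exF x φ, γ => ∃ i ∈ Finset.Icc 1 nw.len, Holds nw φ (Function.update γ x i)
  | exS _ _, _ => False
  | alF x φ, γ => ∀ i ∈ Finset.Icc 1 nw.len, Holds nw φ (Function.update γ x i)
  | alS _ _, _ => False

/-- Free first-order variables. -/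
def fv : MSOF Δ → Finset ℕ
  | eqv x y => {x, y}
  | lab _ x => {x}
  | lev x y => {x, y}
  | nuv x y => {x, y}
  | mem x _ => {x}
  | not φ => φ.fv
  | or φ ψ => φ.fv ∪ ψ.fv
  | and φ ψ => φ.fv ∪ ψ.fv
  | exF x φ => φ.fv.erase x
  | exS _ φ => φ.fv
  | alF x φ => φ.fv.erase x
  | alS _ φ => φ.fv

/-- Size of a formula. -/
def sz : MSOF Δ → ℕ
  | not φ => φ.sz + 1
  | or φ ψ => φ.sz + ψ.sz + 1
  | and φ ψ => φ.sz + ψ.sz + 1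
  | exF _ φ => φ.sz + 1
  | exS _ φ => φ.sz + 1
  | alF _ φ => φ.sz + 1
  | alS _ φ => φ.sz + 1
  | _ => 1

theorem sz_substF (x y : ℕ) (φ : MSOF Δ) : (φ.substF x y).sz = φ.sz := by
  induction φ with
  | exF z φ ih => simp only [substF]; split_ifs <;> simp [sz, ih]
  | alF z φ ih => simp only [substF]; split_ifs <;> simp [sz, ih]
  | _ => simp_all [substF, sz]

theorem FO_substF (x y : ℕ) (φ : MSOF Δ) (h : φ.FO) : (φ.substF x y).FO := by
  induction φ with
  | exF z φ ih => simp only [substF]; split_ifs <;> simp_all [FO]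
  | alF z φ ih => simp only [substF]; split_ifs <;> simp_all [FO]
  | _ => simp_all [substF, FO]

theorem fv_substF (x y : ℕ) (φ : MSOF Δ) :
    (φ.substF x y).fv ⊆ insert y (φ.fv.erase x) := by
  induction φ with
  | exF z φ ih =>
    simp only [substF]; split_ifs
    · intro v; simp [fv]; grind
    · intro v hv; simp [fv] at hv ⊢; have := ih hv.2; simp at this; grind
  | alF z φ ih =>
    simp only [substF]; split_ifs
    · intro v; simp [fv]; grind
    · intro v hv; simp [fv] at hv ⊢; have := ih hv.2; simp at this; grind
  | or φ ψ i1 i2 =>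
    intro v hv; simp [fv, substF] at hv ⊢
    rcases hv with h | h
    · have := i1 h; simp at this; grind
    · have := i2 h; simp at this; grind
  | and φ ψ i1 i2 =>
    intro v hv; simp [fv, substF] at hv ⊢
    rcases hv with h | h
    · have := i1 h; simp at this; grind
    · have := i2 h; simp at this; grind
  | not φ ih => simpa [fv, substF] using ih
  | exS _ φ ih => simpa [fv, substF] using ih
  | alS _ φ ih => simpa [fv, substF] using ih
  | _ => intro v hv; simp [fv, substF] at hv ⊢; grind

theorem holds_congr (nw : NestedWord Δ) (φ : MSOF Δ) (γ γ' : ℕ → ℕ)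
    (h : ∀ x, x ≤ φ.maxF → γ x = γ' x) : Holds nw φ γ ↔ Holds nw φ γ' := by
  induction φ generalizing γ γ' with
  | exF z φ ih =>
    simp only [Holds]
    refine exists_congr fun i => and_congr_right fun _ => ih _ _ ?_
    intro x hx
    by_cases hz : x = z
    · subst hz; simp
    · simp [Function.update_of_ne hz]; exact h x (by simp [maxF]; right; exact hx)
  | alF z φ ih =>
    simp only [Holds]
    refine forall_congr' fun i => imp_congr_right fun _ => ih _ _ ?_
    intro x hx
    by_cases hz : x = z
    · subst hz; simp
    · simp [Function.update_of_ne hz]; exact h x (by simp [maxF]; right; exact hx)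
  | not φ ih => simp only [Holds]; rw [ih γ γ' h]
  | or φ ψ i1 i2 =>
    simp only [Holds]
    rw [i1 γ γ' fun x hx => h x (by simp [maxF]; left; exact hx),
      i2 γ γ' fun x hx => h x (by simp [maxF]; right; exact hx)]
  | and φ ψ i1 i2 =>
    simp only [Holds]
    rw [i1 γ γ' fun x hx => h x (by simp [maxF]; left; exact hx),
      i2 γ γ' fun x hx => h x (by simp [maxF]; right; exact hx)]
  | eqv a b => simp only [Holds]; rw [h a (by simp [maxF]), h b (by simp [maxF])]
  | lev a b => simp only [Holds]; rw [h a (by simp [maxF]), h b (by simp [maxF])]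
  | nuv a b => simp only [Holds]; rw [h a (by simp [maxF]), h b (by simp [maxF])]
  | lab c a => simp only [Holds]; rw [h a (by simp [maxF])]
  | _ => simp [Holds]

theorem holds_substF (nw : NestedWord Δ) (φ : MSOF Δ) (x y : ℕ) (γ : ℕ → ℕ)
    (hy : φ.maxF < y) :
    Holds nw (φ.substF x y) γ ↔ Holds nw φ (Function.update γ x (γ y)) := by
  have key : ∀ (γ : ℕ → ℕ) (u : ℕ), γ (if u = x then y else u) = Function.update γ x (γ y) u := by
    intro γ u; split_ifs with h
    · subst h; simp
    · simp [Function.update_of_ne h]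
  induction φ generalizing γ with
  | exF z φ ih =>
    simp [maxF] at hy
    simp only [substF]; split_ifs with hz
    · subst hz; simp [Holds]
    · simp only [Holds]
      refine exists_congr fun i => and_congr_right fun _ => ?_
      refine (ih _ hy.2).trans ?_
      rw [Function.update_of_ne (by omega : y ≠ z), Function.update_comm (Ne.symm hz)]
  | alF z φ ih =>
    simp [maxF] at hy
    simp only [substF]; split_ifs with hz
    · subst hz; simp [Holds]
    · simp only [Holds]
      refine forall_congr' fun i => imp_congr_right fun _ => ?_
      refine (ih _ hy.2).trans ?_
      rw [Function.update_of_ne (by omega : y ≠ z), Function.update_comm (Ne.symm hz)]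
  | not φ ih => simp only [Holds, substF]; exact not_congr (ih γ hy)
  | or φ ψ i1 i2 =>
    simp [maxF] at hy
    simp only [Holds, substF]; exact or_congr (i1 γ hy.1) (i2 γ hy.2)
  | and φ ψ i1 i2 =>
    simp [maxF] at hy
    simp only [Holds, substF]; exact and_congr (i1 γ hy.1) (i2 γ hy.2)
  | eqv a b => simp only [Holds, substF, key]
  | lev a b => simp only [Holds, substF, key]
  | nuv a b => simp only [Holds, substF, key]
  | lab c a => simp only [Holds, substF, key]
  | _ => simp [Holds, substF]

end MSOF

/-- Bundled properties of an unambiguous weighted version of a predicate. -/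
structure WGood {K Δ : Type} [CommSemiring K] (V : Finset ℕ)
    (H : NestedWord Δ → (ℕ → ℕ) → Prop) (a : WMSO K Δ) : Prop where
  sr : SRMSO a
  nsq : NoSetQuant a
  fvF : a.freeF ⊆ V
  fvS : a.freeS = ∅
  sem_pos : ∀ nw γ1 γ2, H nw γ1 → a.sem nw γ1 γ2 = 1
  sem_neg : ∀ nw γ1 γ2, ¬ H nw γ1 → a.sem nw γ1 γ2 = 0

section
variable {K Δ : Type} [CommSemiring K]

theorem WGood.ex_min {V : Finset ℕ} {x y : ℕ} (hxy : x ≠ y)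
    {H : NestedWord Δ → (ℕ → ℕ) → Prop} {H' : NestedWord Δ → (ℕ → ℕ) → Prop}
    {a χ : WMSO K Δ} (ha : WGood V H a)
    (hχ : WGood (insert y (V.erase x)) H' χ)
    (hu : AUMSO (WMSO.or (.lev x y) (.and (.nle x y) χ)))
    (hH : ∀ nw γ i j, H' nw (Function.update (Function.update γ x i) y j) ↔
      ¬ H nw (Function.update γ x j)) :
    WGood (V.erase x) (fun nw γ => ∃ i ∈ Finset.Icc 1 nw.len, H nw (Function.update γ x i))
      (.exF x (.and a (.alF y (.or (.lev x y) (.and (.nle x y) χ))))) := by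
  classical
  have semχ : ∀ nw γ1 γ2 i j, χ.sem nw (Function.update (Function.update γ1 x i) y j) γ2 =
      if H nw (Function.update γ1 x j) then 0 else 1 := by
    intro nw γ1 γ2 i j
    split_ifs with h
    · exact hχ.sem_neg _ _ _ (by rw [hH]; simpa using h)
    · exact hχ.sem_pos _ _ _ (by rw [hH]; simpa using h)
  have sema : ∀ nw γ1 γ2, a.sem nw γ1 γ2 = if H nw γ1 then 1 else 0 := by
    intro nw γ1 γ2
    split_ifs with h
    · exact ha.sem_pos _ _ _ h
    · exact ha.sem_neg _ _ _ h
  refine ⟨?_, ?_, ?_, ?_, ?_, ?_⟩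
  · simp only [SRMSO]; exact ⟨ha.sr, hu, trivial, trivial, hχ.sr⟩
  · simp only [NoSetQuant]; exact ⟨ha.nsq, trivial, trivial, hχ.nsq⟩
  · intro v hv
    simp [WMSO.freeF] at hv
    have h1 := @ha.fvF v
    have h2 := @hχ.fvF v
    simp at h1 h2 ⊢
    grind
  · simp [WMSO.freeS, ha.fvS, hχ.fvS]
  · intro nw γ1 γ2 h
    obtain ⟨m, hm, hmin⟩ : ∃ m, (m ∈ Finset.Icc 1 nw.len ∧ H nw (Function.update γ1 x m)) ∧
        ∀ j, j < m → ¬ (j ∈ Finset.Icc 1 nw.len ∧ H nw (Function.update γ1 x j)) :=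
      ⟨Nat.find h, Nat.find_spec h, fun j hj => Nat.find_min h hj⟩
    simp only [WMSO.sem, sema, semχ]
    rw [Finset.sum_eq_single m]
    · rw [if_pos hm.2, one_mul]
      refine Finset.prod_eq_one fun j hj => ?_
      simp only [Function.update_of_ne hxy, Function.update_self]
      by_cases hmj : m ≤ j
      · simp [hmj]
      · have := hmin j (by omega)
        simp [hmj, show ¬ H nw (Function.update γ1 x j) from fun h' => this ⟨hj, h'⟩]
    · intro i hi him
      by_cases hHi : H nw (Function.update γ1 x i)
      · have : m < i := by
          rcases lt_trichotomy i m with h | h | h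
          · exact absurd ⟨hi, hHi⟩ (hmin i h)
          · exact absurd h him
          · exact h
        rw [Finset.prod_eq_zero hm.1, mul_zero]
        simp [Function.update_of_ne hxy, hm.2, this]
      · simp [hHi]
    · intro h; exact absurd hm.1 h
  · intro nw γ1 γ2 h
    simp only [WMSO.sem, sema]
    refine Finset.sum_eq_zero fun i hi => ?_
    rw [if_neg fun h' => h ⟨i, hi, h'⟩, zero_mul]

theorem WGood.all {V : Finset ℕ} {x : ℕ}
    {H : NestedWord Δ → (ℕ → ℕ) → Prop} {a : WMSO K Δ} (ha : WGood V H a) (hu : AUMSO a) :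
    WGood (V.erase x) (fun nw γ => ∀ i ∈ Finset.Icc 1 nw.len, H nw (Function.update γ x i))
      (.alF x a) := by
  refine ⟨?_, ?_, ?_, ?_, ?_, ?_⟩
  · simp only [SRMSO]; exact ⟨hu, ha.sr⟩
  · simp only [NoSetQuant]; exact ha.nsq
  · simp only [WMSO.freeF]; exact Finset.erase_subset_erase _ ha.fvF
  · simp [WMSO.freeS, ha.fvS]
  · intro nw γ1 γ2 h
    simp only [WMSO.sem]
    exact Finset.prod_eq_one fun i hi => ha.sem_pos _ _ _ (h i hi)
  · intro nw γ1 γ2 h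
    simp only [WMSO.sem]
    push Not at h
    obtain ⟨i, hi, h⟩ := h
    exact Finset.prod_eq_zero hi (ha.sem_neg _ _ _ h)

theorem WGood.and {V W : Finset ℕ}
    {H H' : NestedWord Δ → (ℕ → ℕ) → Prop} {a b : WMSO K Δ} (ha : WGood V H a)
    (hb : WGood W H' b) : WGood (V ∪ W) (fun nw γ => H nw γ ∧ H' nw γ) (.and a b) := by
  refine ⟨⟨ha.sr, hb.sr⟩, ⟨ha.nsq, hb.nsq⟩, ?_, ?_, ?_, ?_⟩
  · simp only [WMSO.freeF]; exact Finset.union_subset_union ha.fvF hb.fvF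
  · simp [WMSO.freeS, ha.fvS, hb.fvS]
  · intro nw γ1 γ2 h
    simp [WMSO.sem, ha.sem_pos nw γ1 γ2 h.1, hb.sem_pos nw γ1 γ2 h.2]
  · intro nw γ1 γ2 h
    by_cases h1 : H nw γ1
    · simp [WMSO.sem, hb.sem_neg nw γ1 γ2 fun h2 => h ⟨h1, h2⟩]
    · simp [WMSO.sem, ha.sem_neg nw γ1 γ2 h1]

theorem WGood.or {V W : Finset ℕ}
    {H H' : NestedWord Δ → (ℕ → ℕ) → Prop} {a b c : WMSO K Δ} (ha : WGood V H a)
    (hb : WGood V (fun nw γ => ¬ H nw γ) b)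
    (hc : WGood W H' c) :
    WGood (V ∪ W) (fun nw γ => H nw γ ∨ H' nw γ) (.or a (.and b c)) := by
  refine ⟨⟨ha.sr, hb.sr, hc.sr⟩, ⟨ha.nsq, hb.nsq, hc.nsq⟩, ?_, ?_, ?_, ?_⟩
  · simp only [WMSO.freeF]
    intro v hv
    have h1 := @ha.fvF v
    have h2 := @hb.fvF v
    have h3 := @hc.fvF v
    simp at hv ⊢; tauto
  · simp [WMSO.freeS, ha.fvS, hb.fvS, hc.fvS]
  · intro nw γ1 γ2 h
    by_cases h1 : H nw γ1
    · simp [WMSO.sem, ha.sem_pos nw γ1 γ2 h1, hb.sem_neg nw γ1 γ2 (by simpa using h1)]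
    · simp [WMSO.sem, ha.sem_neg nw γ1 γ2 h1, hb.sem_pos nw γ1 γ2 h1,
        hc.sem_pos nw γ1 γ2 (h.resolve_left h1)]
  · intro nw γ1 γ2 h
    simp only [not_or] at h
    simp [WMSO.sem, ha.sem_neg nw γ1 γ2 h.1, hc.sem_neg nw γ1 γ2 h.2]

theorem WGood.congr {V W : Finset ℕ} {H H' : NestedWord Δ → (ℕ → ℕ) → Prop} {a : WMSO K Δ}
    (ha : WGood V H a) (hV : V = W) (h : ∀ nw γ, H nw γ ↔ H' nw γ) : WGood W H' a := by
  subst hV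
  exact ⟨ha.sr, ha.nsq, ha.fvF, ha.fvS, fun nw γ1 γ2 h' => ha.sem_pos _ _ _ ((h _ _).2 h'),
    fun nw γ1 γ2 h' => ha.sem_neg _ _ _ (fun h2 => h' ((h _ _).1 h2))⟩

theorem WGood.mono {V W : Finset ℕ} {H : NestedWord Δ → (ℕ → ℕ) → Prop} {a : WMSO K Δ}
    (ha : WGood V H a) (hV : V ⊆ W) : WGood W H a :=
  ⟨ha.sr, ha.nsq, ha.fvF.trans hV, ha.fvS, ha.sem_pos, ha.sem_neg⟩

/-- Every first-order formula has unambiguous versions. -/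
theorem exists_plus_minus (K : Type) {Δ : Type} [CommSemiring K] :
    ∀ (n : ℕ) (ψ : MSOF Δ), ψ.sz ≤ n → ψ.FO →
      (∃ a : WMSO K Δ, PlusOf K ψ a ∧ WGood ψ.fv (fun nw γ => ψ.Holds nw γ) a) ∧
      (∃ b : WMSO K Δ, MinusOf K ψ b ∧ WGood ψ.fv (fun nw γ => ¬ ψ.Holds nw γ) b) := by
  intro n
  induction n with
  | zero => intro ψ h; cases ψ <;> simp [MSOF.sz] at h
  | succ n ih =>
    intro ψ hsz hfo
    cases ψ with
    | eqv x y =>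
      refine ⟨⟨_, PlusOf.eqv x y, trivial, trivial, by simp [WMSO.freeF, MSOF.fv], rfl, ?_, ?_⟩,
        ⟨_, MinusOf.eqv x y, trivial, trivial, by simp [WMSO.freeF, MSOF.fv], rfl, ?_, ?_⟩⟩ <;>
      · intro nw γ1 γ2 h; simp [MSOF.Holds] at h; simp [WMSO.sem, h]
    | lab x y =>
      refine ⟨⟨_, PlusOf.lab x y, trivial, trivial, by simp [WMSO.freeF, MSOF.fv], rfl, ?_, ?_⟩,
        ⟨_, MinusOf.lab x y, trivial, trivial, by simp [WMSO.freeF, MSOF.fv], rfl, ?_, ?_⟩⟩ <;>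
      · intro nw γ1 γ2 h; simp [MSOF.Holds] at h; simp [WMSO.sem, h]
    | lev x y =>
      refine ⟨⟨_, PlusOf.lev x y, trivial, trivial, by simp [WMSO.freeF, MSOF.fv], rfl, ?_, ?_⟩,
        ⟨_, MinusOf.lev x y, trivial, trivial, by simp [WMSO.freeF, MSOF.fv], rfl, ?_, ?_⟩⟩ <;>
      · intro nw γ1 γ2 h; simp [MSOF.Holds] at h; simp [WMSO.sem, h]
    | nuv x y =>
      refine ⟨⟨_, PlusOf.nuv x y, trivial, trivial, by simp [WMSO.freeF, MSOF.fv], rfl, ?_, ?_⟩,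
        ⟨_, MinusOf.nuv x y, trivial, trivial, by simp [WMSO.freeF, MSOF.fv], rfl, ?_, ?_⟩⟩ <;>
      · intro nw γ1 γ2 h; simp [MSOF.Holds] at h; simp [WMSO.sem, h]
    | mem x y => exact absurd hfo (by simp [MSOF.FO])
    | exS x y => exact absurd hfo (by simp [MSOF.FO])
    | alS x y => exact absurd hfo (by simp [MSOF.FO])
    | not φ =>
      obtain ⟨⟨a, ha, ga⟩, ⟨b, hb, gb⟩⟩ := ih φ (by simp [MSOF.sz] at hsz; omega) hfo
      exact ⟨⟨b, PlusOf.not hb, gb⟩, ⟨a, MinusOf.not ha, ga.congr rfl fun nw γ => by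
        simp [MSOF.Holds]⟩⟩
    | or φ ψ =>
      obtain ⟨⟨a, ha, ga⟩, ⟨b, hb, gb⟩⟩ := ih φ (by simp [MSOF.sz] at hsz; omega) hfo.1
      obtain ⟨⟨a', ha', ga'⟩, ⟨b', hb', gb'⟩⟩ := ih ψ (by simp [MSOF.sz] at hsz; omega) hfo.2
      exact ⟨⟨_, PlusOf.or ha hb ha', ga.or gb ga'⟩, ⟨_, MinusOf.or hb hb',
        (gb.and gb').congr rfl fun nw γ => by simp [MSOF.Holds]⟩⟩
    | and φ ψ =>
      obtain ⟨⟨a, ha, ga⟩, ⟨b, hb, gb⟩⟩ := ih φ (by simp [MSOF.sz] at hsz; omega) hfo.1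
      obtain ⟨⟨a', ha', ga'⟩, ⟨b', hb', gb'⟩⟩ := ih ψ (by simp [MSOF.sz] at hsz; omega) hfo.2
      exact ⟨⟨_, PlusOf.and ha ha', ga.and ga'⟩, ⟨_, MinusOf.and hb ha hb',
        (gb.or (ga.congr rfl fun nw γ => by simp) gb').congr rfl fun nw γ => by
          simp [MSOF.Holds]; tauto⟩⟩
    | exF x φ =>
      have hsz' : φ.sz ≤ n := by simp [MSOF.sz] at hsz; omega
      obtain ⟨⟨a, ha, ga⟩, ⟨b, hb, gb⟩⟩ := ih φ hsz' hfo
      set y := (MSOF.exF x φ).maxF + 1 with hy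
      have hym : φ.maxF < y ∧ x < y := by simp [hy, MSOF.maxF]
      obtain ⟨-, ⟨c, hc, gc⟩⟩ := ih (φ.substF x y) (by rw [MSOF.sz_substF]; exact hsz')
        (MSOF.FO_substF _ _ _ hfo)
      refine ⟨?_, ⟨_, MinusOf.exF hb, (gb.all (AUMSO.unamb ⟨φ, Or.inr hb⟩)).congr rfl ?_⟩⟩
      · have hm := MinusOf.and (MinusOf.not (PlusOf.lev (K := K) (Δ := Δ) x y))
          (PlusOf.not (MinusOf.lev x y)) hc
        refine ⟨_, PlusOf.exF y hy ha hm, ?_⟩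
        refine WGood.ex_min (by omega) ga (gc.mono (MSOF.fv_substF _ _ _))
          (AUMSO.unamb ⟨_, Or.inr hm⟩) ?_
        intro nw γ i j
        rw [MSOF.holds_substF _ _ _ _ _ hym.1]
        refine not_congr (MSOF.holds_congr _ _ _ _ fun v hv => ?_)
        by_cases hvx : v = x
        · subst hvx; simp
        · simp [Function.update_of_ne hvx, Function.update_of_ne (show v ≠ y by omega)]
      · intro nw γ; simp [MSOF.Holds]
    | alF x φ =>
      have hsz' : φ.sz ≤ n := by simp [MSOF.sz] at hsz; omega
      obtain ⟨⟨a, ha, ga⟩, ⟨b, hb, gb⟩⟩ := ih φ hsz' hfo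
      set y := (MSOF.alF x φ).maxF + 1 with hy
      have hym : φ.maxF < y ∧ x < y := by simp [hy, MSOF.maxF]
      obtain ⟨⟨c, hc, gc⟩, -⟩ := ih (φ.substF x y) (by rw [MSOF.sz_substF]; exact hsz')
        (MSOF.FO_substF _ _ _ hfo)
      refine ⟨⟨_, PlusOf.alF ha, ga.all (AUMSO.unamb ⟨φ, Or.inl ha⟩)⟩, ?_⟩
      have hm := MinusOf.and (MinusOf.not (PlusOf.lev (K := K) (Δ := Δ) x y))
          (PlusOf.not (MinusOf.lev x y)) (MinusOf.not hc)
      refine ⟨_, MinusOf.alF y hy hb hm, ?_⟩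
      refine (WGood.ex_min (by omega) gb (gc.mono (MSOF.fv_substF _ _ _))
          (AUMSO.unamb ⟨_, Or.inr hm⟩) ?_).congr rfl ?_
      · intro nw γ i j
        rw [MSOF.holds_substF _ _ _ _ _ hym.1, not_not]
        refine (MSOF.holds_congr _ _ _ _ fun v hv => ?_)
        by_cases hvx : v = x
        · subst hvx; simp
        · simp [Function.update_of_ne hvx, Function.update_of_ne (show v ≠ y by omega)]
      · intro nw γ; simp [MSOF.Holds, and_assoc]

end

/-! ### Part B: normal forms of algebraic systems -/

set_option linter.unusedSectionVars false
set_option linter.unusedSimpArgs false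

/-- Noncommutative polynomials, as lists of monomials. -/
abbrev NPoly (K Δ Y : Type) : Type := List (K × List (Δ ⊕ Y))

section Poly
variable {K Δ Y Y' : Type} [CommSemiring K] {R : Type} [Semiring R] [Algebra K R]

/-- Evaluation of a polynomial. -/
def evP (g : Δ ⊕ Y → R) (p : NPoly K Δ Y) : R := (p.map fun m => m.1 • (m.2.map g).prod).sum

@[simp] theorem evP_nil (g : Δ ⊕ Y → R) : evP g ([] : NPoly K Δ Y) = 0 := rfl

@[simp] theorem evP_cons (g : Δ ⊕ Y → R) (m) (p : NPoly K Δ Y) :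
    evP g (m :: p) = m.1 • (m.2.map g).prod + evP g p := by simp [evP]

@[simp] theorem evP_append (g : Δ ⊕ Y → R) (p q : NPoly K Δ Y) :
    evP g (p ++ q) = evP g p + evP g q := by simp [evP]

/-- Product of polynomials. -/
def mulP (p q : NPoly K Δ Y) : NPoly K Δ Y :=
  p.flatMap fun m => q.map fun d => (m.1 * d.1, m.2 ++ d.2)

theorem evP_mul (g : Δ ⊕ Y → R) (p q : NPoly K Δ Y) :
    evP g (mulP p q) = evP g p * evP g q := by
  have aux : ∀ (m : K × List (Δ ⊕ Y)) (q : NPoly K Δ Y),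
      evP g (q.map fun d => (m.1 * d.1, m.2 ++ d.2)) = (m.1 • (m.2.map g).prod) * evP g q := by
    intro m q
    induction q with
    | nil => simp
    | cons d q ih =>
      simp only [List.map_cons, evP_cons, ih, mul_add, List.map_append, List.prod_append]
      rw [smul_mul_smul_comm]
  induction p with
  | nil => simp [mulP]
  | cons m p ih =>
    have : mulP (m :: p) q = (q.map fun d => (m.1 * d.1, m.2 ++ d.2)) ++ mulP p q := by
      simp [mulP]
    rw [this, evP_append, aux, ih, evP_cons, add_mul]

/-- Finite sums of polynomials. -/
noncomputable def sumP [Fintype Y'] (f : Y' → NPoly K Δ Y) : NPoly K Δ Y :=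
  (Finset.univ : Finset Y').toList.flatMap f

theorem evP_sum [Fintype Y'] (g : Δ ⊕ Y → R) (f : Y' → NPoly K Δ Y) :
    evP g (sumP f) = ∑ y, evP g (f y) := by
  have : ∀ L : List Y', evP g (L.flatMap f) = (L.map fun y => evP g (f y)).sum := by
    intro L; induction L with
    | nil => simp
    | cons a L ih => simp [ih]
  rw [sumP, this, Finset.sum_map_toList]

theorem mem_sumP [Fintype Y'] (f : Y' → NPoly K Δ Y) (m) : m ∈ sumP f ↔ ∃ y, m ∈ f y := by
  simp [sumP]

/-- All words of the polynomial satisfy `C`. -/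
def AllW (C : List (Δ ⊕ Y) → Prop) (p : NPoly K Δ Y) : Prop := ∀ m ∈ p, C m.2

theorem AllW.append {C : List (Δ ⊕ Y) → Prop} {p q : NPoly K Δ Y} (hp : AllW C p)
    (hq : AllW C q) : AllW C (p ++ q) := by
  intro m hm; rcases List.mem_append.1 hm with h | h
  · exact hp m h
  · exact hq m h

theorem AllW.sum [Fintype Y'] {C : List (Δ ⊕ Y) → Prop} {f : Y' → NPoly K Δ Y}
    (hp : ∀ y, AllW C (f y)) : AllW C (sumP f) := by
  intro m hm; obtain ⟨y, hy⟩ := (mem_sumP f m).1 hm; exact hp y m hy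

theorem mem_mulP {p q : NPoly K Δ Y} {m} (h : m ∈ mulP p q) :
    ∃ a ∈ p, ∃ b ∈ q, m.2 = a.2 ++ b.2 := by
  simp only [mulP, List.mem_flatMap, List.mem_map] at h
  obtain ⟨a, ha, b, hb, rfl⟩ := h
  exact ⟨a, ha, b, hb, rfl⟩

theorem AllW.mul {C C1 C2 : List (Δ ⊕ Y) → Prop} {p q : NPoly K Δ Y} (hp : AllW C1 p)
    (hq : AllW C2 q) (h : ∀ u v, C1 u → C2 v → C (u ++ v)) : AllW C (mulP p q) := by
  intro m hm; obtain ⟨a, ha, b, hb, e⟩ := mem_mulP hm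
  rw [e]; exact h _ _ (hp a ha) (hq b hb)

/-- Word ends with a letter. -/
def EndL (u : List (Δ ⊕ Y)) : Prop := ∃ v a, u = v ++ [Sum.inl a]
/-- Word starts with a letter. -/
def StartL (u : List (Δ ⊕ Y)) : Prop := ∃ a v, u = Sum.inl a :: v

theorem EndL.app {u v : List (Δ ⊕ Y)} (h : EndL v) : EndL (u ++ v) := by
  obtain ⟨w, a, rfl⟩ := h; exact ⟨u ++ w, a, by simp⟩

theorem StartL.app {u v : List (Δ ⊕ Y)} (h : StartL u) : StartL (u ++ v) := by
  obtain ⟨a, w, rfl⟩ := h; exact ⟨a, w ++ v, by simp⟩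

/-- The monomials ending with a letter. -/
def endT : NPoly K Δ Y → NPoly K Δ Y :=
  List.filterMap fun m => match m.2.getLast? with
    | some (Sum.inl _) => some m
    | _ => none

open Classical in
/-- The monomials ending with the variable `y`, with this variable removed. -/
noncomputable def endR (p : NPoly K Δ Y) (y : Y) : NPoly K Δ Y :=
  p.filterMap fun m => match m.2.getLast? with
    | some (Sum.inr z) => if z = y then some (m.1, m.2.dropLast) else none
    | _ => none

theorem mem_endT {p : NPoly K Δ Y} {m} (h : m ∈ endT p) : m ∈ p ∧ EndL m.2 := by
  simp only [endT, List.mem_filterMap] at h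
  obtain ⟨d, hd, e⟩ := h
  rcases List.eq_nil_or_concat d.2 with h0 | ⟨v, s, hs⟩
  · simp [h0] at e
  · cases s with
    | inl a =>
      simp [hs] at e; subst e
      exact ⟨hd, v, a, by simpa using hs⟩
    | inr z => simp [hs] at e

theorem mem_endR {p : NPoly K Δ Y} {y} {m} (h : m ∈ endR p y) :
    ∃ d ∈ p, d.2 = m.2 ++ [Sum.inr y] := by
  simp only [endR, List.mem_filterMap] at h
  obtain ⟨d, hd, e⟩ := h
  rcases List.eq_nil_or_concat d.2 with h0 | ⟨v, s, hs⟩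
  · simp [h0] at e
  · cases s with
    | inl a => simp [hs] at e
    | inr z =>
      simp [hs] at e
      obtain ⟨rfl, rfl⟩ := e
      exact ⟨d, hd, by simpa using hs⟩

theorem evP_split [Fintype Y] (g : Δ ⊕ Y → R) (p : NPoly K Δ Y) (hp : AllW (· ≠ []) p) :
    evP g p = evP g (endT p) + ∑ y, evP g (endR p y) * g (Sum.inr y) := by
  classical
  induction p with
  | nil => simp [endT, endR]
  | cons m p ih =>
    have ih := ih fun d hd => hp d (List.mem_cons_of_mem _ hd)
    have hm : m.2 ≠ [] := hp m List.mem_cons_self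
    rw [evP_cons, ih]
    obtain ⟨c, u⟩ := m
    rcases List.eq_nil_or_concat u with h0 | ⟨v, s, hs⟩
    · exact absurd h0 hm
    · simp only [List.concat_eq_append] at hs
      subst hs
      cases s with
      | inl a =>
        have h1 : endT ((c, v ++ [Sum.inl a]) :: p) = (c, v ++ [Sum.inl a]) :: endT p := by
          simp [endT, List.filterMap_cons]
        have h2 : ∀ y, endR ((c, v ++ [Sum.inl a]) :: p) y = endR p y := by
          intro y; simp [endR, List.filterMap_cons]
        simp only [h1, h2, evP_cons, add_assoc]
      | inr z =>
        have h1 : endT ((c, v ++ [Sum.inr z]) :: p) = endT p := by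
          simp [endT, List.filterMap_cons]
        have h2 : ∀ y, endR ((c, v ++ [Sum.inr z]) :: p) y =
            if z = y then (c, v) :: endR p y else endR p y := by
          intro y; simp only [endR, List.filterMap_cons]
          by_cases h : z = y <;> simp [h]
        have h3 : ∀ y, evP g (endR ((c, v ++ [Sum.inr z]) :: p) y) * g (Sum.inr y) =
            (if z = y then c • ((v ++ [Sum.inr z]).map g).prod else 0)
              + evP g (endR p y) * g (Sum.inr y) := by
          intro y; rw [h2]
          by_cases h : z = y
          · subst h; simp [add_mul]
          · simp [h]
        simp only [h1, h3, Finset.sum_add_distrib]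
        simp
        abel

/-- Renaming of variables. -/
def renP (f : Y → Y') (p : NPoly K Δ Y) : NPoly K Δ Y' :=
  p.map fun m => (m.1, m.2.map (Sum.map id f))

theorem evP_ren (f : Y → Y') (g : Δ ⊕ Y' → R) (p : NPoly K Δ Y) :
    evP g (renP f p) = evP (g ∘ Sum.map id f) p := by
  simp [evP, renP, Function.comp_def]

theorem AllW.ren {C : List (Δ ⊕ Y) → Prop} {C' : List (Δ ⊕ Y') → Prop} {f : Y → Y'}
    {p : NPoly K Δ Y} (hp : AllW C p) (h : ∀ u, C u → C' (u.map (Sum.map id f))) :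
    AllW C' (renP f p) := by
  intro m hm; simp only [renP, List.mem_map] at hm
  obtain ⟨d, hd, rfl⟩ := hm
  exact h _ (hp d hd)

theorem EndL.ren {f : Y → Y'} {u : List (Δ ⊕ Y)} (h : EndL u) :
    EndL (u.map (Sum.map id f)) := by
  obtain ⟨v, a, rfl⟩ := h; exact ⟨v.map (Sum.map id f), a, by simp⟩

theorem StartL.ren {f : Y → Y'} {u : List (Δ ⊕ Y)} (h : StartL u) :
    StartL (u.map (Sum.map id f)) := by
  obtain ⟨a, v, rfl⟩ := h; exact ⟨a, v.map (Sum.map id f), by simp⟩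

/-- A single variable. -/
def varP (y : Y) : NPoly K Δ Y := [(1, [Sum.inr y])]

@[simp] theorem evP_var (g : Δ ⊕ Y → R) (y : Y) : evP g (varP y : NPoly K Δ Y) = g (Sum.inr y) := by
  simp [varP]

end Poly

/-- A nilpotent filtration. -/
structure Filt (K R : Type) [CommSemiring K] [Semiring R] [Algebra K R] where
  F : ℕ → Submodule K R
  mul : ∀ {i j a b}, a ∈ F i → b ∈ F j → a * b ∈ F (i + j)
  anti : ∀ {i j}, i ≤ j → F j ≤ F i
  top : ∀ a, a ∈ F 0
  n : ℕ
  nil : ∀ a, a ∈ F n → a = 0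

section Star
variable {K R Y : Type} [CommSemiring K] [Semiring R] [Algebra K R] [Fintype Y] [DecidableEq Y]

theorem Filt.pow_mem (F : Filt K R) (M : Matrix Y Y R) (hM : ∀ x y, M x y ∈ F.F 1) (k : ℕ) :
    ∀ x y, (M ^ k) x y ∈ F.F k := by
  induction k with
  | zero => intro x y; exact F.top _
  | succ k ih =>
    intro x y
    rw [pow_succ, Matrix.mul_apply]
    exact Submodule.sum_mem _ fun z _ => F.mul (ih x z) (hM z y)

theorem Filt.pow_zero (F : Filt K R) (M : Matrix Y Y R) (hM : ∀ x y, M x y ∈ F.F 1) :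
    M ^ F.n = 0 := by
  ext x y; exact F.nil _ (F.pow_mem M hM _ x y)

/-- The quasi-inverse. -/
noncomputable def mplus (M : Matrix Y Y R) (n : ℕ) : Matrix Y Y R :=
  ∑ k ∈ Finset.range n, M ^ (k + 1)

theorem mplus_eq (M : Matrix Y Y R) (n : ℕ) (h : M ^ n = 0) :
    mplus M n = M + M * M + M * mplus M n * M := by
  have h1 : mplus M n = ∑ k ∈ Finset.range (n + 2), M ^ (k + 1) := by
    rw [Finset.sum_range_succ, Finset.sum_range_succ, pow_succ, pow_succ, pow_succ, h]
    simp [mplus]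
  conv_lhs => rw [h1]
  rw [Finset.sum_range_succ', Finset.sum_range_succ', mplus, Finset.mul_sum, Finset.sum_mul]
  have : ∀ k, M ^ (k + 1 + 1 + 1) = M * M ^ (k + 1) * M := by
    intro k; rw [pow_succ, pow_succ']
  simp only [this]
  simp [pow_succ]
  abel

theorem vec_eq (M : Matrix Y Y R) (n : ℕ) (h : M ^ n = 0) (V t : Y → R)
    (hV : V = t + M.mulVec V) :
    V = t + M.mulVec t + M.mulVec ((mplus M n).mulVec t) := by
  have key : ∀ k, V = (∑ l ∈ Finset.range k, M ^ l).mulVec t + (M ^ k).mulVec V := by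
    intro k
    induction k with
    | zero => simp
    | succ k ih =>
      conv_lhs => rw [ih]
      conv_lhs => enter [2]; rw [hV]
      rw [Finset.sum_range_succ, Matrix.add_mulVec, Matrix.mulVec_add, Matrix.mulVec_mulVec,
        pow_succ]
      abel
  have h2 : M ^ (n + 2) = 0 := by rw [pow_add, h, zero_mul]
  have := key (n + 2)
  rw [h2, Matrix.zero_mulVec, add_zero, Finset.sum_range_succ', Finset.sum_range_succ'] at this
  rw [Matrix.mulVec_mulVec, mplus, Finset.mul_sum]
  conv_lhs => rw [this]
  simp only [Matrix.add_mulVec, pow_zero, Matrix.one_mulVec, zero_add, pow_one]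
  have : ∀ k, M ^ (k + 1 + 1) = M * M ^ (k + 1) := fun k => by rw [pow_succ']
  simp only [this]
  abel

end Star

section Systems
variable {K Δ : Type} [CommSemiring K]

/-- `V` solves the system `P`. -/
def Solves {Y R : Type} [Semiring R] [Algebra K R] (P : Y → NPoly K Δ Y) (α : Δ → R)
    (V : Y → R) : Prop := ∀ y, V y = evP (Sum.elim α V) (P y)

/-- Solutions of `P` extend to solutions of the second system. -/
def Sim {Y Y' : Type} (P : Y → NPoly K Δ Y) (P' : Y' → NPoly K Δ Y') (ι : Y → Y') : Prop :=
  ∀ (R : Type) [Semiring R] [Algebra K R] (F : Filt K R) (α : Δ → R) (V : Y → R),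
    (∀ a, α a ∈ F.F 1) → (∀ y, V y ∈ F.F 1) → Solves P α V →
    ∃ V' : Y' → R, (∀ y, V' y ∈ F.F 1) ∧ Solves P' α V' ∧ ∀ y, V' (ι y) = V y

theorem Sim.trans {Y Y' Y'' : Type} {P : Y → NPoly K Δ Y} {P' : Y' → NPoly K Δ Y'}
    {P'' : Y'' → NPoly K Δ Y''} {ι : Y → Y'} {ι' : Y' → Y''} (h : Sim P P' ι)
    (h' : Sim P' P'' ι') : Sim P P'' (ι' ∘ ι) := by
  intro R _ _ F α V hα hV hs
  obtain ⟨V', h1, h2, h3⟩ := h R F α V hα hV hs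
  obtain ⟨V'', k1, k2, k3⟩ := h' R F α V' hα h1 h2
  exact ⟨V'', k1, k2, fun y => by simp [k3, h3]⟩

theorem prod_mem_F {R Y : Type} [Semiring R] [Algebra K R] (F : Filt K R) (g : Δ ⊕ Y → R)
    (hg : ∀ s, g s ∈ F.F 1) (u : List (Δ ⊕ Y)) (hu : u ≠ []) : (u.map g).prod ∈ F.F 1 := by
  cases u with
  | nil => exact absurd rfl hu
  | cons s u =>
    simp only [List.map_cons, List.prod_cons]
    exact F.anti (by omega) (F.mul (hg s) (F.top _))

theorem evP_mem_F {R Y : Type} [Semiring R] [Algebra K R] (F : Filt K R) (g : Δ ⊕ Y → R)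
    (hg : ∀ s, g s ∈ F.F 1) (p : NPoly K Δ Y) (hp : AllW (· ≠ []) p) : evP g p ∈ F.F 1 := by
  induction p with
  | nil => simp
  | cons m p ih =>
    rw [evP_cons]
    exact Submodule.add_mem _ (Submodule.smul_mem _ _ (prod_mem_F F g hg _
      (hp m List.mem_cons_self))) (ih fun d hd => hp d (List.mem_cons_of_mem _ hd))

/-- Right Greibach step, the original variables. -/
noncomputable def grA {Y : Type} [Fintype Y] (P : Y → NPoly K Δ Y) (x : Y) :
    NPoly K Δ (Y ⊕ (Y × Y)) :=
  (renP Sum.inl (endT (P x)) ++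
    sumP fun y => mulP (renP Sum.inl (endR (P x) y)) (renP Sum.inl (endT (P y)))) ++
    sumP fun y => mulP (renP Sum.inl (endR (P x) y))
      (sumP fun z => mulP (varP (Sum.inr (y, z))) (renP Sum.inl (endT (P z))))

/-- The polynomials `R x y` with the last variable replaced. -/
noncomputable def grF {Y : Type} [Fintype Y] (P : Y → NPoly K Δ Y) (x y : Y) :
    NPoly K Δ (Y ⊕ (Y × Y)) :=
  renP Sum.inl (endT (endR (P x) y)) ++
    sumP fun v => mulP (renP Sum.inl (endR (endR (P x) y) v)) (grA P v)

/-- Right Greibach step. -/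
noncomputable def grS {Y : Type} [Fintype Y] (P : Y → NPoly K Δ Y) :
    Y ⊕ (Y × Y) → NPoly K Δ (Y ⊕ (Y × Y))
  | Sum.inl x => grA P x
  | Sum.inr (x, y) => (grF P x y ++
      sumP fun z => mulP (renP Sum.inl (endR (P x) z)) (grF P z y)) ++
      sumP fun z => sumP fun v => mulP (mulP (renP Sum.inl (endR (P x) z))
        (varP (Sum.inr (z, v)))) (grF P v y)

/-- Proper systems. -/
def Prop1 {Y : Type} (P : Y → NPoly K Δ Y) : Prop :=
  ∀ x, AllW (fun u => u ≠ [] ∧ ∀ z, u ≠ [Sum.inr z]) (P x)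

theorem gr_sim {Y : Type} [Fintype Y] (P : Y → NPoly K Δ Y) (hP : Prop1 P) :
    Sim P (grS P) Sum.inl := by
  classical
  intro R _ _ F α V hα hV hs
  set g : Δ ⊕ Y → R := Sum.elim α V with hg
  have hgF : ∀ s, g s ∈ F.F 1 := by rintro (a | y); exacts [hα a, hV y]
  have hne : ∀ x y, AllW (· ≠ []) (endR (P x) y) := by
    intro x y m hm h0
    obtain ⟨d, hd, e⟩ := mem_endR hm
    exact (hP x d hd).2 y (by rw [e, h0]; rfl)
  set M : Matrix Y Y R := fun x y => evP g (endR (P x) y) with hM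
  have hMF : ∀ x y, M x y ∈ F.F 1 := fun x y => evP_mem_F F g hgF _ (hne x y)
  have hn := F.pow_zero M hMF
  set L := mplus M F.n with hL
  have hLF : ∀ x y, L x y ∈ F.F 1 := by
    intro x y
    rw [hL, mplus, Matrix.sum_apply]
    exact Submodule.sum_mem _ fun k _ => F.anti (by omega) (F.pow_mem M hMF _ x y)
  set t : Y → R := fun x => evP g (endT (P x)) with ht
  have hVeq : V = t + M.mulVec V := by
    funext x
    rw [hs x, evP_split _ _ (fun m hm => (hP x m hm).1)]
    simp [Matrix.mulVec, dotProduct, ht, hM, hg]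
  have hV2 := vec_eq M F.n hn V t hVeq
  have hL2 := mplus_eq M F.n hn
  rw [← hL] at hV2 hL2
  set V' : Y ⊕ (Y × Y) → R := Sum.elim V (fun q => L q.1 q.2) with hV'
  have hg' : (Sum.elim α V') ∘ Sum.map id Sum.inl = g := by
    funext s; cases s <;> simp [hg, hV']
  have hren : ∀ p : NPoly K Δ Y, evP (Sum.elim α V') (renP Sum.inl p) = evP g p := by
    intro p; rw [evP_ren, hg']
  have hA : ∀ x, evP (Sum.elim α V') (grA P x) = V x := by
    intro x
    simp only [grA, evP_append, evP_sum, evP_mul, hren, evP_var]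
    conv_rhs => rw [hV2]
    simp [Matrix.mulVec, dotProduct, ht, hM, hV']
  have hF : ∀ x y, evP (Sum.elim α V') (grF P x y) = M x y := by
    intro x y
    simp only [grF, evP_append, evP_sum, evP_mul, hren, hA]
    simp only [hM]
    rw [evP_split g (endR (P x) y) (hne x y)]
    simp [hg]
  refine ⟨V', ?_, ?_, fun y => by simp [hV']⟩
  · rintro (y | ⟨x, y⟩)
    · exact hV y
    · exact hLF x y
  · rintro (x | ⟨x, y⟩)
    · simp only [grS, hA]; rfl
    · simp only [grS, evP_append, evP_sum, evP_mul, hren, hF, evP_var]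
      show L x y = _
      conv_lhs => rw [hL2]
      simp only [Matrix.add_apply, Matrix.mul_apply, Finset.sum_mul]
      rw [Finset.sum_comm (γ := Y)]
      simp [hM, hV']

theorem endT_AllW {Y : Type} (p : NPoly K Δ Y) : AllW EndL (endT p) := fun _ hm => (mem_endT hm).2

theorem AllW.endT {Y : Type} {C} {p : NPoly K Δ Y} (h : AllW C p) : AllW C (endT p) :=
  fun m hm => h m (mem_endT hm).1

theorem allW_true {Y : Type} (p : NPoly K Δ Y) : AllW (fun _ => True) p := fun _ _ => trivial

theorem grA_end {Y : Type} [Fintype Y] (P : Y → NPoly K Δ Y) (x : Y) : AllW EndL (grA P x) := by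
  have h : ∀ y, AllW EndL (renP (Sum.inl : Y → Y ⊕ (Y × Y)) (endT (P y))) :=
    fun y => (endT_AllW (P y)).ren fun _ h => h.ren
  refine ((h x).append (AllW.sum fun y => ?_)).append (AllW.sum fun y => ?_)
  · exact (allW_true _).mul (h y) fun _ _ _ h => h.app
  · exact (allW_true _).mul (AllW.sum fun z => (allW_true _).mul (h z) fun _ _ _ h => h.app)
      fun _ _ _ h => h.app

theorem grF_end {Y : Type} [Fintype Y] (P : Y → NPoly K Δ Y) (x y : Y) :
    AllW EndL (grF P x y) := by
  refine AllW.append ?_ (AllW.sum fun v => ?_)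
  · exact (endT_AllW _).ren fun _ h => h.ren
  · exact (allW_true _).mul (grA_end P v) fun _ _ _ h => h.app

theorem grS_end {Y : Type} [Fintype Y] (P : Y → NPoly K Δ Y) (x) : AllW EndL (grS P x) := by
  rcases x with x | ⟨x, y⟩
  · exact grA_end P x
  · refine ((grF_end P x y).append (AllW.sum fun z => ?_)).append
      (AllW.sum fun z => AllW.sum fun v => ?_)
    · exact (allW_true _).mul (grF_end P z y) fun _ _ _ h => h.app
    · exact (allW_true _).mul (grF_end P v y) fun _ _ _ h => h.app

theorem AllW.endR_start {Y : Type} {p : NPoly K Δ Y} (h : AllW StartL p) (y : Y) :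
    AllW StartL (endR p y) := by
  intro m hm
  obtain ⟨d, hd, e⟩ := mem_endR hm
  obtain ⟨a, v, hv⟩ := h d hd
  rw [e] at hv
  cases hm2 : m.2 with
  | nil => rw [hm2] at hv; simp at hv
  | cons s r => rw [hm2] at hv; simp at hv; exact ⟨a, r, by rw [hv.1]⟩

theorem grA_start {Y : Type} [Fintype Y] (P : Y → NPoly K Δ Y) (h : ∀ x, AllW StartL (P x))
    (x : Y) : AllW StartL (grA P x) := by
  have hT : ∀ y, AllW StartL (renP (Sum.inl : Y → Y ⊕ (Y × Y)) (endT (P y))) :=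
    fun y => (h y).endT.ren fun _ h => h.ren
  have hR : ∀ y z, AllW StartL (renP (Sum.inl : Y → Y ⊕ (Y × Y)) (endR (P y) z)) :=
    fun y z => ((h y).endR_start z).ren fun _ h => h.ren
  refine ((hT x).append (AllW.sum fun y => ?_)).append (AllW.sum fun y => ?_)
  · exact (hR x y).mul (allW_true _) fun _ _ h _ => h.app
  · exact (hR x y).mul (allW_true _) fun _ _ h _ => h.app

theorem grF_start {Y : Type} [Fintype Y] (P : Y → NPoly K Δ Y) (h : ∀ x, AllW StartL (P x))
    (x y : Y) : AllW StartL (grF P x y) := by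
  refine AllW.append ?_ (AllW.sum fun v => ?_)
  · exact ((h x).endR_start y).endT.ren fun _ h => h.ren
  · exact AllW.mul ((((h x).endR_start y).endR_start v).ren fun _ h => h.ren) (allW_true _)
      fun _ _ h _ => h.app

theorem grS_start {Y : Type} [Fintype Y] (P : Y → NPoly K Δ Y) (h : ∀ x, AllW StartL (P x)) (x) :
    AllW StartL (grS P x) := by
  have hR : ∀ y z, AllW StartL (renP (Sum.inl : Y → Y ⊕ (Y × Y)) (endR (P y) z)) :=
    fun y z => ((h y).endR_start z).ren fun _ h => h.ren
  rcases x with x | ⟨x, y⟩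
  · exact grA_start P h x
  · refine ((grF_start P h x y).append (AllW.sum fun z => ?_)).append
      (AllW.sum fun z => AllW.sum fun v => ?_)
    · exact (hR x z).mul (allW_true _) fun _ _ h _ => h.app
    · exact ((hR x z).mul (allW_true _) fun _ _ h _ => h.app).mul (allW_true _) fun _ _ h _ => h.app

/-- Reversal of polynomials. -/
def revP {Y : Type} (p : NPoly K Δ Y) : NPoly K Δ Y := p.map fun m => (m.1, m.2.reverse)

theorem revP_revP {Y : Type} (p : NPoly K Δ Y) : revP (revP p) = p := by
  simp [revP, Function.comp_def]

open MulOpposite in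
theorem evP_rev {Y R : Type} [Semiring R] [Algebra K R] (g : Δ ⊕ Y → R) (p : NPoly K Δ Y) :
    evP (op ∘ g) (revP p) = op (evP g p) := by
  induction p with
  | nil => simp [revP]
  | cons m p ih =>
    have : revP (m :: p) = (m.1, m.2.reverse) :: revP p := rfl
    rw [this, evP_cons, evP_cons, ih, op_add, op_smul, op_list_prod]
    simp

open MulOpposite in
/-- The opposite filtration. -/
def Filt.op {R : Type} [Semiring R] [Algebra K R] (F : Filt K R) : Filt K Rᵐᵒᵖ where
  F k := (F.F k).comap (opLinearEquiv K : R ≃ₗ[K] Rᵐᵒᵖ).symm.toLinearMap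
  mul := by
    intro i j a b ha hb
    simp at ha hb ⊢
    rw [add_comm]; exact F.mul hb ha
  anti := by intro i j h a ha; simp at ha ⊢; exact F.anti h ha
  top := by intro a; simp; exact F.top _
  n := F.n
  nil := by intro a ha; simp at ha; exact unop_injective (F.nil _ ha)

open MulOpposite in
theorem Sim.rev {Y Y' : Type} {P : Y → NPoly K Δ Y} {P' : Y' → NPoly K Δ Y'} {ι : Y → Y'}
    (h : Sim P P' ι) : Sim (fun y => revP (P y)) (fun y => revP (P' y)) ι := by
  intro R _ _ F α V hα hV hs
  have hs' : Solves P (op ∘ α) (op ∘ V) := by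
    intro y
    have := evP_rev (Sum.elim α V) (revP (P y))
    rw [revP_revP, ← hs y] at this
    rw [Function.comp_apply, ← this]
    congr 1; funext s; cases s <;> rfl
  obtain ⟨V', h1, h2, h3⟩ := h Rᵐᵒᵖ F.op (op ∘ α) (op ∘ V)
    (fun a => by simpa [Filt.op] using hα a) (fun a => by simpa [Filt.op] using hV a) hs'
  refine ⟨unop ∘ V', fun y => by simpa [Filt.op] using h1 y, ?_, fun y => by simp [h3]⟩
  intro y
  apply op_injective
  rw [← evP_rev, Function.comp_apply, op_unop, h2 y, revP_revP]
  · congr 1; funext s; cases s <;> simp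
  
theorem dgnf {Y : Type} [Fintype Y] (P : Y → NPoly K Δ Y) (hP : Prop1 P) :
    ∃ (Y' : Type) (_ : Fintype Y') (P' : Y' → NPoly K Δ Y') (ι : Y → Y'),
      Sim P P' ι ∧ ∀ y, AllW (fun u => StartL u ∧ EndL u) (P' y) := by
  set P1 := grS P with hP1
  have s1 : Sim P P1 Sum.inl := gr_sim P hP
  have e1 : ∀ x, AllW StartL (revP (P1 x)) := by
    intro x m hm
    simp only [revP, List.mem_map] at hm
    obtain ⟨d, hd, rfl⟩ := hm
    obtain ⟨v, a, e⟩ := grS_end P x d hd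
    exact ⟨a, v.reverse, by simp [e]⟩
  have p1 : Prop1 fun x => revP (P1 x) := by
    intro x m hm
    obtain ⟨a, v, e⟩ := e1 x m hm
    simp [e]
  have s2 := (gr_sim (fun x => revP (P1 x)) p1).rev
  simp only [revP_revP] at s2
  refine ⟨_, inferInstance, _, _, s1.trans s2, ?_⟩
  intro y m hm
  simp only [revP, List.mem_map] at hm
  obtain ⟨d, hd, rfl⟩ := hm
  obtain ⟨v, a, e⟩ := grS_end _ _ d hd
  obtain ⟨a', v', e'⟩ := grS_start _ e1 _ d hd
  exact ⟨⟨a, v.reverse, by simp [e]⟩, ⟨v'.reverse, a', by simp [e']⟩⟩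

end Systems

/-! ### Part B2: padding -/

section Subst
variable {K Δ : Type} [CommSemiring K] {Y Y' : Type}

/-- Substitution of polynomials for variables in a word. -/
def substW (σ : Y → NPoly K Δ Y') : List (Δ ⊕ Y) → NPoly K Δ Y'
  | [] => [(1, [])]
  | Sum.inl a :: u => mulP [(1, [Sum.inl a])] (substW σ u)
  | Sum.inr y :: u => mulP (σ y) (substW σ u)

/-- Substitution of polynomials for variables in a polynomial. -/
def substP (σ : Y → NPoly K Δ Y') (p : NPoly K Δ Y) : NPoly K Δ Y' :=
  p.flatMap fun m => mulP [(m.1, [])] (substW σ m.2)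

theorem evP_substW {R : Type} [Semiring R] [Algebra K R] (σ : Y → NPoly K Δ Y') (α : Δ → R)
    (V' : Y' → R) (u : List (Δ ⊕ Y)) :
    evP (Sum.elim α V') (substW σ u) =
      (u.map (Sum.elim α fun y => evP (Sum.elim α V') (σ y))).prod := by
  induction u with
  | nil => simp [substW]
  | cons s u ih => cases s <;> simp [substW, evP_mul, ih]

theorem evP_substP {R : Type} [Semiring R] [Algebra K R] (σ : Y → NPoly K Δ Y') (α : Δ → R)
    (V' : Y' → R) (p : NPoly K Δ Y) :
    evP (Sum.elim α V') (substP σ p) =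
      evP (Sum.elim α fun y => evP (Sum.elim α V') (σ y)) p := by
  induction p with
  | nil => simp [substP]
  | cons m p ih =>
    have : substP σ (m :: p) = mulP [(m.1, [])] (substW σ m.2) ++ substP σ p := by
      simp [substP]
    rw [this, evP_append, ih, evP_mul, evP_substW, evP_cons]
    simp

theorem AllW.substP {σ : Y → NPoly K Δ Y'} {p : NPoly K Δ Y} {C : List (Δ ⊕ Y) → Prop}
    {C' : List (Δ ⊕ Y') → Prop} (h : AllW C p)
    (hC : ∀ u, C u → AllW C' (substW σ u)) : AllW C' (substP σ p) := by
  intro m hm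
  simp only [_root_.substP, List.mem_flatMap] at hm
  obtain ⟨d, hd, hm⟩ := hm
  obtain ⟨a, ha, b, hb, e⟩ := mem_mulP hm
  simp at ha
  subst ha
  rw [e]; exact hC _ (h d hd) b hb

theorem substW_inl {σ : Y → NPoly K Δ Y'} {a : Δ} {u m} (h : m ∈ substW σ (Sum.inl a :: u)) :
    ∃ b ∈ substW σ u, m.2 = Sum.inl a :: b.2 := by
  obtain ⟨x, hx, b, hb, e⟩ := mem_mulP h
  simp at hx
  subst hx
  exact ⟨b, hb, by simpa using e⟩

/-- Pure, or at least `k` leading letters. -/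
def PadW : ℕ → List (Δ ⊕ Y) → Prop
  | 0, _ => True
  | _ + 1, [] => True
  | k + 1, Sum.inl _ :: u => PadW k u
  | _ + 1, Sum.inr _ :: _ => False

/-- At least `k` leading letters. -/
def LeadW : ℕ → List (Δ ⊕ Y) → Prop
  | 0, _ => True
  | _ + 1, [] => False
  | k + 1, Sum.inl _ :: u => LeadW k u
  | _ + 1, Sum.inr _ :: _ => False

theorem PadW.subst {σ : Y → NPoly K Δ Y'} (hσ : ∀ y, AllW StartL (σ y)) :
    ∀ (u : List (Δ ⊕ Y)) (k : ℕ), PadW k u → AllW (PadW (k + 1)) (substW σ u) := by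
  intro u
  induction u with
  | nil => intro k _ m hm; simp [substW] at hm; subst hm; simp [PadW]
  | cons s u ih =>
    intro k h m hm
    cases s with
    | inl a =>
      obtain ⟨b, hb, e⟩ := substW_inl hm
      rw [e]
      cases k with
      | zero => trivial
      | succ k => exact ih k h b hb
    | inr y =>
      cases k with
      | zero =>
        obtain ⟨x, hx, b, hb, e⟩ := mem_mulP hm
        obtain ⟨a, v, e'⟩ := hσ y x hx
        rw [e, e']; trivial
      | succ k => exact absurd h (by simp [PadW])

theorem LeadW.subst {σ : Y → NPoly K Δ Y'} :
    ∀ (u : List (Δ ⊕ Y)) (k : ℕ), LeadW k u → AllW (LeadW k) (substW σ u) := by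
  intro u
  induction u with
  | nil => intro k h m hm; cases k <;> simp [LeadW] at h ⊢
  | cons s u ih =>
    intro k h m hm
    cases k with
    | zero => trivial
    | succ k =>
      cases s with
      | inl a =>
        obtain ⟨b, hb, e⟩ := substW_inl hm
        rw [e]; exact ih k h b hb
      | inr y => exact absurd h (by simp [LeadW])

theorem EndL.subst {σ : Y → NPoly K Δ Y'} (u : List (Δ ⊕ Y)) (h : EndL u) :
    AllW EndL (substW σ u) := by
  obtain ⟨v, a, rfl⟩ := h
  induction v with
  | nil =>
    intro m hm; obtain ⟨b, hb, e⟩ := substW_inl hm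
    simp [substW] at hb; subst hb
    exact ⟨[], a, by simpa using e⟩
  | cons s v ih =>
    intro m hm
    cases s with
    | inl c =>
      obtain ⟨b, hb, e⟩ := substW_inl hm
      rw [e, show Sum.inl c :: b.2 = [Sum.inl c] ++ b.2 from rfl]
      exact (ih b hb).app
    | inr y =>
      obtain ⟨x, hx, b, hb, e⟩ := mem_mulP hm
      rw [e]; exact (ih b hb).app

/-- The list of letters of a pure word. -/
def pureOf : List (Δ ⊕ Y) → Option (List Δ)
  | [] => some []
  | Sum.inl a :: u => (pureOf u).map (a :: ·)
  | Sum.inr _ :: _ => none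

theorem pureOf_some : ∀ (u : List (Δ ⊕ Y)) t, pureOf u = some t → u = t.map Sum.inl := by
  intro u
  induction u with
  | nil => intro t h; simp [pureOf] at h; simp [← h]
  | cons s u ih =>
    intro t h
    cases s with
    | inl a =>
      simp [pureOf] at h
      obtain ⟨b, hb, rfl⟩ := h
      simp [ih b hb]
    | inr y => simp [pureOf] at h

theorem lead_of_pad : ∀ (u : List (Δ ⊕ Y)) k, PadW k u → pureOf u = none → LeadW k u := by
  intro u
  induction u with
  | nil => intro k _ h; simp [pureOf] at h
  | cons s u ih =>
    intro k h h2
    cases k with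
    | zero => trivial
    | succ k =>
      cases s with
      | inl a => exact ih k h (by simpa [pureOf] using h2)
      | inr y => exact absurd h (by simp [PadW])

theorem lead_split : ∀ (k : ℕ) (u : List (Δ ⊕ Y)), LeadW k u →
    ∃ (p : List Δ) (v : List (Δ ⊕ Y)), p.length = k ∧ u = p.map Sum.inl ++ v := by
  intro k
  induction k with
  | zero => intro u _; exact ⟨[], u, rfl, rfl⟩
  | succ k ih =>
    intro u h
    rcases u with _ | ⟨a | y, u⟩
    · exact absurd h (by simp [LeadW])
    · obtain ⟨p, v, h1, h2⟩ := ih u h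
      exact ⟨a :: p, v, by simp [h1], by simp [h2]⟩
    · exact absurd h (by simp [LeadW])

end Subst

/-- Padded monomials. -/
structure Mono (K Δ : Type) (N : ℕ) where
  c : K
  a0 : Δ
  a1 : Δ
  p : List Δ
  a2 : Δ
  r : List (Δ ⊕ Fin N)
  b : Δ

/-- The word of a padded monomial. -/
def Mono.word {K Δ : Type} {N : ℕ} (m : Mono K Δ N) : List (Δ ⊕ Fin N) :=
  Sum.inl m.a0 :: Sum.inl m.a1 :: (m.p.map Sum.inl ++ Sum.inl m.a2 :: (m.r ++ [Sum.inl m.b]))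

theorem exists_list_of_forall {A B : Type} (f : B → A) (C : B → Prop) (L : List A)
    (h : ∀ a ∈ L, ∃ b, f b = a ∧ C b) : ∃ L' : List B, L'.map f = L ∧ ∀ b ∈ L', C b := by
  induction L with
  | nil => exact ⟨[], rfl, by simp⟩
  | cons a L ih =>
    obtain ⟨b, hb, hC⟩ := h a List.mem_cons_self
    obtain ⟨L', h1, h2⟩ := ih fun x hx => h x (List.mem_cons_of_mem _ hx)
    refine ⟨b :: L', by simp [hb, h1], ?_⟩
    intro x hx
    rcases List.mem_cons.1 hx with rfl | hx
    · exact hC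
    · exact h2 x hx

theorem exists_mono {K Δ : Type} {N : ℕ} (X : Fin N) (c : K) (u : List (Δ ⊕ Fin N))
    (hl : LeadW (N + 3) u) (he : EndL u) :
    ∃ m : Mono K Δ N, (m.c, m.word) = (c, u) ∧ m.p.length = X := by
  obtain ⟨p, v, hp, rfl⟩ := lead_split _ _ hl
  rcases p with _ | ⟨a0, _ | ⟨a1, p⟩⟩
  · simp at hp
  · simp at hp
  have hX := X.2
  have hp' : p.length = N + 1 := by simpa using hp
  obtain ⟨a2, q, hq⟩ : ∃ a2 q, p.drop X = a2 :: q := by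
    cases h : p.drop X with
    | nil => have := congrArg List.length h; simp at this; omega
    | cons a q => exact ⟨a, q, rfl⟩
  have hql : q ≠ [] := by
    rintro rfl; have := congrArg List.length hq; simp at this; omega
  have hps : p = p.take X ++ a2 :: q := by rw [← hq, List.take_append_drop]
  obtain ⟨w, b, hb⟩ := he
  rcases List.eq_nil_or_concat (q.map Sum.inl ++ v) with h0 | ⟨r, s, hs⟩
  · simp at h0; exact absurd h0.1 hql
  · rw [List.concat_eq_append] at hs
    have hu : ((a0 :: a1 :: p).map Sum.inl ++ v : List (Δ ⊕ Fin N)) =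
        Sum.inl a0 :: Sum.inl a1 :: ((p.take X).map Sum.inl ++ Sum.inl a2 :: (r ++ [s])) := by
      rw [← hs]
      conv_lhs => rw [hps]
      simp
    have hsb : s = Sum.inl b := by
      have := hu.symm.trans hb
      have h5 : ((Sum.inl a0 :: Sum.inl a1 :: ((p.take X).map Sum.inl ++ Sum.inl a2 :: r)) ++ [s] :
          List (Δ ⊕ Fin N)) = w ++ [Sum.inl b] := by rw [← this]; simp
      have h6 := congrArg List.getLast? h5
      rw [List.getLast?_concat, List.getLast?_concat] at h6
      exact Option.some.inj h6
    subst hsb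
    refine ⟨⟨c, a0, a1, p.take X, a2, r, b⟩, ?_, by simp; omega⟩
    simp only [Mono.word]
    rw [hu]

theorem normal_form {K Δ : Type} [CommSemiring K] {Y : Type} [Fintype Y] (P : Y → NPoly K Δ Y)
    (hP : Prop1 P) (x0 : Y) :
    ∃ (N : ℕ) (Q : Fin N → List (Mono K Δ N)) (T : List (K × List Δ)) (y0 : Fin N),
      (∀ X, ∀ m ∈ Q X, m.p.length = X) ∧ (∀ t ∈ T, t.2 ≠ []) ∧
      ∀ (R : Type) [Semiring R] [Algebra K R] (F : Filt K R) (α : Δ → R) (V : Y → R),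
        (∀ a, α a ∈ F.F 1) → (∀ y, V y ∈ F.F 1) → Solves P α V →
        ∃ V' : Fin N → R, (∀ y, V' y ∈ F.F 1) ∧
          (∀ X, V' X = ((Q X).map fun m => m.c • (m.word.map (Sum.elim α V')).prod).sum) ∧
          V x0 = (T.map fun t => t.1 • (t.2.map α).prod).sum + V' y0 := by
  classical
  obtain ⟨Y', hY', P1', ι', sim', hw'⟩ := dgnf P hP
  set N := Fintype.card Y' with hN
  let e : Y' ≃ Fin N := Fintype.equivFin Y'
  obtain ⟨P2, h2, s2⟩ : ∃ P2 : Y' → NPoly K Δ Y',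
      (∀ y, AllW (fun u => PadW (N + 3) u ∧ EndL u) (P2 y)) ∧
      ∀ (R : Type) [Semiring R] [Algebra K R] (α : Δ → R) (V : Y' → R),
        Solves P1' α V → Solves P2 α V := by
    generalize N + 3 = k
    induction k with
    | zero => exact ⟨P1', fun y m hm => ⟨trivial, (hw' y m hm).2⟩, fun _ _ _ _ _ h => h⟩
    | succ k ih =>
      obtain ⟨P2, h2, s2⟩ := ih
      refine ⟨fun y => substP P1' (P2 y), fun y => ?_, ?_⟩
      · refine (h2 y).substP fun u hu m hm => ⟨?_, ?_⟩
        · exact PadW.subst (fun y m hm => (hw' y m hm).1) u k hu.1 m hm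
        · exact EndL.subst u hu.2 m hm
      · intro R _ _ α V hs y
        have hs2 := s2 R α V hs
        rw [evP_substP]
        have : (fun y => evP (Sum.elim α V) (P1' y)) = V := funext fun y => (hs y).symm
        rw [this]; exact hs2 y
  -- dissolve terminal words
  let T : Y' → List (K × List Δ) := fun y =>
    (P2 y).filterMap fun m => (pureOf m.2).map fun t => (m.1, t)
  let W : Y' → NPoly K Δ Y' := fun y => (P2 y).filter fun m => (pureOf m.2).isNone
  have hTW : ∀ (R : Type) [Semiring R] [Algebra K R] (α : Δ → R) (V : Y' → R) y,
      evP (Sum.elim α V) (P2 y) =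
        ((T y).map fun t => t.1 • (t.2.map α).prod).sum + evP (Sum.elim α V) (W y) := by
    intro R _ _ α V y
    simp only [T, W]
    generalize P2 y = p
    induction p with
    | nil => simp
    | cons m p ih =>
      rw [evP_cons, ih]
      cases h : pureOf m.2 with
      | none => simp [h]; abel
      | some t =>
        have hm : (m.2.map (Sum.elim α V)).prod = (t.map α).prod := by
          rw [pureOf_some _ _ h]; simp [Function.comp_def]
        rw [hm]
        simp [h, add_assoc]
  have hW : ∀ y, AllW (fun u => LeadW (N + 3) u ∧ EndL u) (W y) := by
    intro y m hm
    simp only [W, List.mem_filter] at hm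
    have := h2 y m hm.1
    exact ⟨lead_of_pad _ _ this.1 (by simpa using hm.2), this.2⟩
  let σ : Y' → NPoly K Δ (Fin N) := fun y => (T y).map (fun t => (t.1, t.2.map Sum.inl)) ++ varP (e y)
  have hQ : ∀ X : Fin N, ∃ Q : List (Mono K Δ N),
      Q.map (fun m => (m.c, m.word)) = substP σ (W (e.symm X)) ∧ ∀ m ∈ Q, m.p.length = X := by
    intro X
    apply exists_list_of_forall
    have : AllW (fun u => LeadW (N + 3) u ∧ EndL u) (substP σ (W (e.symm X))) :=
      (hW _).substP fun u hu m hm => ⟨LeadW.subst u _ hu.1 m hm, EndL.subst u hu.2 m hm⟩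
    rintro ⟨c, u⟩ hm
    exact exists_mono X c u (this _ hm).1 (this _ hm).2
  choose Q hQ1 hQ2 using hQ
  refine ⟨N, Q, T (ι' x0), e (ι' x0), hQ2, ?_, ?_⟩
  · rintro ⟨c, t⟩ ht h0
    simp only [T, List.mem_filterMap, Option.map_eq_some_iff] at ht
    obtain ⟨m, hm, t', ht', e'⟩ := ht
    simp at e' h0
    have := pureOf_some _ _ ht'
    obtain ⟨v, a, hv⟩ := (h2 _ m hm).2
    rw [hv, e'.2, h0] at this; simp at this
  · intro R _ _ F α V hα hV hs
    obtain ⟨U, hU1, hU2, hU3⟩ := sim' R F α V hα hV hs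
    have hs2 := s2 R α U hU2
    let V' : Fin N → R := fun X => evP (Sum.elim α U) (W (e.symm X))
    have hUV : ∀ y, U y = ((T y).map fun t => t.1 • (t.2.map α).prod).sum + V' (e y) := by
      intro y; rw [hs2 y, hTW]; simp [V']
    refine ⟨V', fun y => ?_, fun X => ?_, ?_⟩
    · apply evP_mem_F
      · rintro (a | y); exacts [hα a, hU1 y]
      · intro m hm h0
        have := (hW _ m hm).1
        rw [h0] at this; exact this
    · have h3 := evP_substP σ α V' (W (e.symm X))
      have h4 : (fun y => evP (Sum.elim α V') (σ y)) = U := by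
        funext y
        rw [hUV y]
        simp only [σ, evP_append, evP_var]
        simp [evP, Function.comp_def]
      rw [h4, ← hQ1] at h3
      rw [show V' X = evP (Sum.elim α U) (W (e.symm X)) from rfl, ← h3]
      simp [evP, Function.comp_def]
    · rw [← hU3, hUV]

/-! ### Part C: combinatorics of nestings -/

/-- Nestings as finite sets of arcs. -/
structure Nst (s : Finset (ℕ × ℕ)) : Prop where
  lt : ∀ p q, (p, q) ∈ s → p < q
  fn : ∀ p q q', (p, q) ∈ s → (p, q') ∈ s → q = q'
  inj : ∀ p p' q, (p, q) ∈ s → (p', q) ∈ s → p = p'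
  nc : ∀ p q p' q', (p, q) ∈ s → (p', q') ∈ s → p < p' → q < p' ∨ q' < q

open Classical in
/-- Nestings living on `(x, y]`. -/
noncomputable def NN (x y : ℕ) : Finset (Finset (ℕ × ℕ)) :=
  ((Finset.Ioc x y ×ˢ Finset.Ioc x y).powerset).filter Nst

theorem mem_NN {x y : ℕ} {s : Finset (ℕ × ℕ)} :
    s ∈ NN x y ↔ Nst s ∧ ∀ p q, (p, q) ∈ s → x < p ∧ q ≤ y := by
  simp only [NN, Finset.mem_filter, Finset.mem_powerset]
  constructor
  · rintro ⟨h1, h2⟩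
    refine ⟨h2, fun p q h => ?_⟩
    have := h1 h
    simp at this; omega
  · rintro ⟨h1, h2⟩
    refine ⟨?_, h1⟩
    rintro ⟨p, q⟩ h
    have := h2 p q h
    have := h1.lt p q h
    simp; omega

/-- Internal positions. -/
def Intl (s : Finset (ℕ × ℕ)) (z : ℕ) : Prop := ∀ p q, (p, q) ∈ s → p ≠ z ∧ q ≠ z

/-- Call positions. -/
def Cll (s : Finset (ℕ × ℕ)) (k : ℕ) : Prop := ∃ j, (k, j) ∈ s

/-- Agreement on arcs touching `(x, y]`. -/
def Agr (s t : Finset (ℕ × ℕ)) (x y : ℕ) : Prop :=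
  ∀ p q, ((x < p ∧ p ≤ y) ∨ (x < q ∧ q ≤ y)) → ((p, q) ∈ s ↔ (p, q) ∈ t)

theorem Agr.symm {s t x y} (h : Agr s t x y) : Agr t s x y := fun p q hp => (h p q hp).symm

theorem Agr.mono {s t x y x' y'} (h : Agr s t x y) (hx : x ≤ x') (hy : y' ≤ y) :
    Agr s t x' y' := fun p q hp => h p q (by omega)

theorem Agr.intl {s t x y z} (h : Agr s t x y) (hx : x < z) (hy : z ≤ y) (hs : Intl s z) :
    Intl t z := by
  intro p q hpq
  by_cases hp : p = z
  · exact absurd hp (hs p q ((h p q (by omega)).2 hpq)).1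
  · by_cases hq : q = z
    · exact absurd hq (hs p q ((h p q (by omega)).2 hpq)).2
    · exact ⟨hp, hq⟩

/-- Closedness of an interval. -/
def Clo (s : Finset (ℕ × ℕ)) (x y : ℕ) : Prop := ∀ p q, (p, q) ∈ s → x < p → p ≤ y → q ≤ y

theorem Agr.clo {s t x y} (h : Agr s t x y) (hs : Clo s x y) : Clo t x y :=
  fun p q hpq h1 h2 => hs p q ((h p q (by omega)).2 hpq) h1 h2

section
variable {Δ : Type} {N : ℕ} (ℓ : ℕ → Δ)

/-- A step over a letter or over a nonterminal block. -/
def Stp (s : Finset (ℕ × ℕ)) : Δ ⊕ Fin N → ℕ → ℕ → Prop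
  | Sum.inl a, x, z => z = x + 1 ∧ Intl s z ∧ ℓ z = a
  | Sum.inr Y, x, z => (x + 1, z) ∈ s ∧ (x + 2, x + 3 + Y) ∈ s

/-- A chain of steps. -/
def Chn (s : Finset (ℕ × ℕ)) : List (Δ ⊕ Fin N) → ℕ → ℕ → Prop
  | [], x, y => x = y
  | σ :: r, x, y => ∃ z, Stp ℓ s σ x z ∧ Chn s r z y

variable {ℓ}

theorem Stp.lt {s : Finset (ℕ × ℕ)} (hs : Nst s) {σ : Δ ⊕ Fin N} {x z} (h : Stp ℓ s σ x z) :
    x < z := by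
  cases σ with
  | inl a => have := h.1; omega
  | inr Y => have := hs.lt _ _ h.1; omega

theorem Chn.le {s : Finset (ℕ × ℕ)} (hs : Nst s) {r : List (Δ ⊕ Fin N)} {x y} (h : Chn ℓ s r x y) :
    x ≤ y := by
  induction r generalizing x with
  | nil => exact le_of_eq h
  | cons σ r ih =>
    obtain ⟨z, h1, h2⟩ := h
    have := h1.lt hs
    have := ih h2
    omega

theorem Stp.agr {s t : Finset (ℕ × ℕ)} (hs : Nst s) {σ : Δ ⊕ Fin N} {x z}
    (ha : Agr s t x z) (h : Stp ℓ s σ x z) : Stp ℓ t σ x z := by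
  have hlt := h.lt hs
  cases σ with
  | inl a => exact ⟨h.1, ha.intl hlt le_rfl h.2.1, h.2.2⟩
  | inr Y =>
    have := hs.lt _ _ h.1
    exact ⟨(ha _ _ (by omega)).1 h.1, (ha _ _ (by omega)).1 h.2⟩

theorem Chn.agr {s t : Finset (ℕ × ℕ)} (hs : Nst s) {r : List (Δ ⊕ Fin N)} {x y}
    (ha : Agr s t x y) (h : Chn ℓ s r x y) : Chn ℓ t r x y := by
  induction r generalizing x with
  | nil => exact h
  | cons σ r ih =>
    obtain ⟨z, h1, h2⟩ := h
    have l1 := h1.lt hs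
    have l2 := h2.le hs
    exact ⟨z, h1.agr hs (ha.mono le_rfl l2), ih (ha.mono l1.le le_rfl) h2⟩

theorem Stp.uniq {s : Finset (ℕ × ℕ)} (hs : Nst s) {σ : Δ ⊕ Fin N} {x z z'}
    (h : Stp ℓ s σ x z) (h' : Stp ℓ s σ x z') : z = z' := by
  cases σ with
  | inl a => rw [h.1, h'.1]
  | inr Y => exact hs.fn _ _ _ h.1 h'.1

theorem Stp.nocross {s : Finset (ℕ × ℕ)} (hs : Nst s) {σ : Δ ⊕ Fin N} {x z} (h : Stp ℓ s σ x z)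
    (p q) (hpq : (p, q) ∈ s) (hp : x < p) : q ≤ z ∨ z < p := by
  cases σ with
  | inl a => have := h.1; have := h.2.1 p q hpq; omega
  | inr Y =>
    by_cases h1 : p = x + 1
    · subst h1; left; exact le_of_eq (hs.fn _ _ _ hpq h.1)
    · have := hs.nc _ _ _ _ h.1 hpq (by omega); omega

variable {K : Type} (ℓ)

/-- The fragment of monomial `m` starts at position `k`. -/
def Frg (s : Finset (ℕ × ℕ)) (k : ℕ) (X : Fin N) (m : Mono K Δ N) : Prop :=
  ∃ j, (k, j) ∈ s ∧ (k + 1, k + 2 + X) ∈ s ∧ ℓ k = m.a0 ∧ ℓ (k + 1) = m.a1 ∧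
    Chn ℓ s (m.p.map Sum.inl : List (Δ ⊕ Fin N)) (k + 1) (k + 1 + X) ∧ ℓ (k + 2 + X) = m.a2 ∧
    Chn ℓ s m.r (k + 2 + X) (j - 1) ∧ ℓ j = m.b

variable {ℓ}

theorem Frg.agr {s t : Finset (ℕ × ℕ)} (hs : Nst s) {x y k X} {m : Mono K Δ N}
    (ha : Agr s t x y) (hc : Clo s x y) (hx : x < k) (hy : k ≤ y) (h : Frg ℓ s k X m) :
    Frg ℓ t k X m := by
  obtain ⟨j, h1, h2, h3, h4, h5, h6, h7, h8⟩ := h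
  have hj := hc _ _ h1 hx hy
  have l1 := hs.lt _ _ h1
  have hj2 := hc _ _ h2 (by omega) (by omega)
  exact ⟨j, (ha _ _ (by omega)).1 h1, (ha _ _ (by omega)).1 h2, h3, h4,
    h5.agr hs (ha.mono (by omega) (by omega)), h6, h7.agr hs (ha.mono (by omega) (by omega)), h8⟩

variable [CommSemiring K] (ℓ) (Q : Fin N → List (Mono K Δ N))

open Classical in
/-- The local weight. -/
noncomputable def fw (s : Finset (ℕ × ℕ)) (k : ℕ) : K :=
  if Cll s k ∧ Cll s (k + 1) then
    ∑ X, ((Q X).map fun m => if Frg ℓ s k X m then m.c else 0).sum else 1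

variable {ℓ Q}

theorem fw_agr {s t : Finset (ℕ × ℕ)} (hs : Nst s) (ht : Nst t) {x y k}
    (ha : Agr s t x y) (hc : Clo s x y) (hx : x < k) (hy : k ≤ y) : fw ℓ Q s k = fw ℓ Q t k := by
  have hF : ∀ X (m : Mono K Δ N), Frg ℓ s k X m ↔ Frg ℓ t k X m := fun X m =>
    ⟨fun h => h.agr hs ha hc hx hy, fun h => h.agr ht ha.symm (ha.clo hc) hx hy⟩
  have hB : (Cll s k ∧ Cll s (k + 1)) ↔ (Cll t k ∧ Cll t (k + 1)) := by
    constructor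
    · rintro ⟨⟨j, h1⟩, ⟨j', h2⟩⟩
      have := hc _ _ h1 hx hy
      have := hs.lt _ _ h1
      exact ⟨⟨j, (ha _ _ (by omega)).1 h1⟩, ⟨j', (ha _ _ (by omega)).1 h2⟩⟩
    · rintro ⟨⟨j, h1⟩, ⟨j', h2⟩⟩
      have := ha.clo hc _ _ h1 hx hy
      have := ht.lt _ _ h1
      exact ⟨⟨j, (ha _ _ (by omega)).2 h1⟩, ⟨j', (ha _ _ (by omega)).2 h2⟩⟩
  classical
  rw [fw, fw]
  refine if_congr hB (Finset.sum_congr rfl fun X _ => congrArg _ (List.map_congr_left fun m _ => ?_)) rfl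
  exact if_congr (hF X m) rfl rfl

variable (ℓ Q)

open Classical in
/-- Weight of a single step. -/
noncomputable def C1 (σ : Δ ⊕ Fin N) (x y : ℕ) : K :=
  ∑ s ∈ NN x y, if Stp ℓ s σ x y then ∏ k ∈ Finset.Ioc x y, fw ℓ Q s k else 0

open Classical in
/-- Weight of a chain. -/
noncomputable def CC (r : List (Δ ⊕ Fin N)) (x y : ℕ) : K :=
  ∑ s ∈ NN x y, if Chn ℓ s r x y then ∏ k ∈ Finset.Ioc x y, fw ℓ Q s k else 0

theorem union_NN {x z y : ℕ} {s1 s2 : Finset (ℕ × ℕ)} (h1 : s1 ∈ NN x z) (h2 : s2 ∈ NN z y)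
    (hx : x ≤ z) (hy : z ≤ y) :
    s1 ∪ s2 ∈ NN x y ∧ Agr (s1 ∪ s2) s1 x z ∧ Agr (s1 ∪ s2) s2 z y ∧
      Clo (s1 ∪ s2) x z ∧ Clo (s1 ∪ s2) z y := by
  rw [mem_NN] at *
  obtain ⟨n1, b1⟩ := h1
  obtain ⟨n2, b2⟩ := h2
  have l1 := n1.lt
  have l2 := n2.lt
  refine ⟨⟨⟨?_, ?_, ?_, ?_⟩, ?_⟩, ?_, ?_, ?_, ?_⟩
  · grind
  · intro p q q' h h'
    have := n1.fn p q q'; have := n2.fn p q q'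
    grind
  · intro p p' q h h'
    have := n1.inj p p' q; have := n2.inj p p' q
    grind
  · intro p q p' q' h h' hlt
    have := n1.nc p q p' q'; have := n2.nc p q p' q'
    grind
  · grind
  · intro p q h; grind
  · intro p q h; grind
  · intro p q h; grind
  · intro p q h; grind

theorem split_aux (σ : Δ ⊕ Fin N) (r : List (Δ ⊕ Fin N)) {x z y : ℕ} (hx : x ≤ z) (hy : z ≤ y) :
    (open Classical in ∑ s ∈ NN x y, if Stp ℓ s σ x z ∧ Chn ℓ s r z y then
      ∏ k ∈ Finset.Ioc x y, fw ℓ Q s k else 0) = C1 ℓ Q σ x z * CC ℓ Q r z y := by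
  classical
  rw [C1, CC, Finset.sum_mul_sum, ← Finset.sum_product', ← Finset.sum_filter]
  have : ∀ q : Finset (ℕ × ℕ) × Finset (ℕ × ℕ),
      ((if Stp ℓ q.1 σ x z then ∏ k ∈ Finset.Ioc x z, fw ℓ Q q.1 k else 0) *
        if Chn ℓ q.2 r z y then ∏ k ∈ Finset.Ioc z y, fw ℓ Q q.2 k else 0) =
      if Stp ℓ q.1 σ x z ∧ Chn ℓ q.2 r z y then
        (∏ k ∈ Finset.Ioc x z, fw ℓ Q q.1 k) * ∏ k ∈ Finset.Ioc z y, fw ℓ Q q.2 k else 0 := by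
    intro q; split_ifs <;> simp_all
  simp only [this]
  rw [← Finset.sum_filter]
  refine Finset.sum_bij' (fun s _ => (s.filter (fun p => p.2 ≤ z), s.filter (fun p => z < p.1)))
    (fun q _ => q.1 ∪ q.2) ?_ ?_ ?_ ?_ ?_
  · intro s hs
    simp only [Finset.mem_filter, Finset.mem_product, mem_NN] at hs ⊢
    obtain ⟨⟨n, b⟩, h1, h2⟩ := hs
    have hnc := h1.nocross n
    have nsub : ∀ t ⊆ s, Nst t := fun t ht => ⟨fun p q h => n.lt _ _ (ht h),
      fun p q q' h h' => n.fn _ _ _ (ht h) (ht h'), fun p q q' h h' => n.inj _ _ _ (ht h) (ht h'),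
      fun p q p' q' h h' => n.nc _ _ _ _ (ht h) (ht h')⟩
    have nlt := n.lt
    refine ⟨⟨⟨nsub _ (Finset.filter_subset _ _), by grind⟩,
      ⟨nsub _ (Finset.filter_subset _ _), by grind⟩⟩, h1.agr n ?_, h2.agr n ?_⟩
    · intro p q h; grind
    · intro p q h; grind
  · intro q hq
    simp only [Finset.mem_filter, Finset.mem_product] at hq ⊢
    obtain ⟨⟨m1, m2⟩, h1, h2⟩ := hq
    obtain ⟨u1, u2, u3, u4, u5⟩ := union_NN m1 m2 hx hy
    exact ⟨u1, h1.agr (mem_NN.1 m1).1 u2.symm, h2.agr (mem_NN.1 m2).1 u3.symm⟩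
  · intro s hs
    simp only [Finset.mem_filter, mem_NN] at hs ⊢
    obtain ⟨⟨n, b⟩, h1, h2⟩ := hs
    have hnc := h1.nocross n
    ext ⟨p, q⟩
    grind
  · rintro ⟨s1, s2⟩ hq
    simp only [Finset.mem_filter, Finset.mem_product, mem_NN] at hq ⊢
    obtain ⟨⟨⟨n1, m1⟩, ⟨n2, m2⟩⟩, h1, h2⟩ := hq
    have l1 := n1.lt
    have l2 := n2.lt
    ext ⟨p, q⟩ <;> simp <;> grind
  · intro s hs
    simp only [Finset.mem_filter, mem_NN] at hs ⊢
    obtain ⟨⟨n, b⟩, h1, h2⟩ := hs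
    have hnc := h1.nocross n
    have nlt := n.lt
    have nsub : ∀ t ⊆ s, Nst t := fun t ht => ⟨fun p q h => n.lt _ _ (ht h),
      fun p q q' h h' => n.fn _ _ _ (ht h) (ht h'), fun p q q' h h' => n.inj _ _ _ (ht h) (ht h'),
      fun p q p' q' h h' => n.nc _ _ _ _ (ht h) (ht h')⟩
    rw [← Finset.prod_Ioc_consecutive _ hx hy]
    congr 1
    · refine Finset.prod_congr rfl fun k hk => ?_
      rw [Finset.mem_Ioc] at hk
      refine fw_agr n (nsub _ (Finset.filter_subset _ _)) (x := x) (y := z) ?_ ?_ hk.1 hk.2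
      · intro p q h; grind
      · intro p q h; grind
    · refine Finset.prod_congr rfl fun k hk => ?_
      rw [Finset.mem_Ioc] at hk
      refine fw_agr n (nsub _ (Finset.filter_subset _ _)) (x := z) (y := y) ?_ ?_ hk.1 hk.2
      · intro p q h; grind
      · intro p q h; grind

theorem CC_cons (σ : Δ ⊕ Fin N) (r : List (Δ ⊕ Fin N)) (x y : ℕ) :
    CC ℓ Q (σ :: r) x y = ∑ z ∈ Finset.Ioc x y, C1 ℓ Q σ x z * CC ℓ Q r z y := by
  classical
  have : ∀ z ∈ Finset.Ioc x y, C1 ℓ Q σ x z * CC ℓ Q r z y =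
      ∑ s ∈ NN x y, if Stp ℓ s σ x z ∧ Chn ℓ s r z y then
        ∏ k ∈ Finset.Ioc x y, fw ℓ Q s k else 0 := by
    intro z hz
    rw [Finset.mem_Ioc] at hz
    rw [← split_aux ℓ Q σ r hz.1.le hz.2]
  rw [Finset.sum_congr rfl this, Finset.sum_comm, CC]
  refine Finset.sum_congr rfl fun s hs => ?_
  have n := (mem_NN.1 hs).1
  by_cases h : Chn ℓ s (σ :: r) x y
  · rw [if_pos h]
    obtain ⟨z, h1, h2⟩ := h
    rw [Finset.sum_eq_single z, if_pos ⟨h1, h2⟩]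
    · intro z' _ hne
      rw [if_neg]
      rintro ⟨h3, _⟩
      exact hne (h3.uniq n h1)
    · intro hz
      exact absurd (Finset.mem_Ioc.2 ⟨h1.lt n, h2.le n⟩) hz
  · rw [if_neg h]
    symm
    apply Finset.sum_eq_zero
    intro z _
    rw [if_neg]
    rintro ⟨h1, h2⟩
    exact h ⟨z, h1, h2⟩

theorem NN_of_ge {x y : ℕ} (h : y ≤ x + 1) : NN x y = {∅} := by
  ext s
  rw [mem_NN, Finset.mem_singleton]
  constructor
  · rintro ⟨n, b⟩
    rw [Finset.eq_empty_iff_forall_notMem]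
    rintro ⟨p, q⟩ hpq
    have := b p q hpq
    have := n.lt p q hpq
    omega
  · rintro rfl
    exact ⟨⟨by simp, by simp, by simp, by simp⟩, by simp⟩

theorem C1_letter (a : Δ) (x z : ℕ) :
    C1 ℓ Q (Sum.inl a) x z = open Classical in if z = x + 1 ∧ ℓ z = a then 1 else 0 := by
  classical
  by_cases h : z = x + 1
  · subst h
    rw [C1, NN_of_ge le_rfl]
    simp [Stp, Intl, fw, Cll]
  · rw [C1, if_neg (by tauto)]
    apply Finset.sum_eq_zero
    intro s _
    rw [if_neg]
    rintro ⟨h', _⟩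
    exact h h'

theorem CC_nil (x y : ℕ) : CC ℓ Q [] x y = open Classical in if x = y then 1 else 0 := by
  classical
  by_cases h : x = y
  · subst h
    rw [CC, NN_of_ge (by omega)]
    simp [Chn]
  · simp [CC, Chn, h]

end

section
variable {Δ : Type} {N : ℕ} {ℓ : ℕ → Δ}

theorem Chn.intl {s : Finset (ℕ × ℕ)} {p : List Δ} {x y : ℕ}
    (h : Chn ℓ s (p.map Sum.inl : List (Δ ⊕ Fin N)) x y) :
    y = x + p.length ∧ ∀ k, x < k → k ≤ y → Intl s k := by
  induction p generalizing x with
  | nil => have h : x = y := h; subst h; exact ⟨rfl, fun k _ _ => by omega⟩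
  | cons a p ih =>
    obtain ⟨z, ⟨h1, h2, h3⟩, h4⟩ := h
    subst h1
    obtain ⟨i1, i2⟩ := ih h4
    refine ⟨by simp; omega, fun k hk hk2 => ?_⟩
    by_cases hk3 : k = x + 1
    · subst hk3; exact h2
    · exact i2 k (by omega) hk2

theorem nst_empty : Nst ∅ := ⟨by simp, by simp, by simp, by simp⟩

theorem Chn.to_empty {s : Finset (ℕ × ℕ)} (hs : Nst s) {p : List Δ} {x y : ℕ}
    (h : Chn ℓ s (p.map Sum.inl : List (Δ ⊕ Fin N)) x y) :
    Chn ℓ ∅ (p.map Sum.inl : List (Δ ⊕ Fin N)) x y := by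
  refine h.agr hs fun p' q' hpq => ?_
  have := h.intl.2
  constructor
  · intro h2
    rcases hpq with h3 | h3
    · exact absurd rfl (this _ h3.1 h3.2 _ _ h2).1
    · exact absurd rfl (this _ h3.1 h3.2 _ _ h2).2
  · simp

variable {K : Type} [CommSemiring K] (Q : Fin N → List (Mono K Δ N))

/-- Insert the two head arcs of a fragment. -/
def insA (t : Finset (ℕ × ℕ)) (x y X : ℕ) : Finset (ℕ × ℕ) :=
  insert (x + 1, y) (insert (x + 2, x + 3 + X) t)

theorem mem_insA {t : Finset (ℕ × ℕ)} {x y X p q : ℕ} : (p, q) ∈ insA t x y X ↔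
    (p = x + 1 ∧ q = y) ∨ (p = x + 2 ∧ q = x + 3 + X) ∨ (p, q) ∈ t := by
  simp [insA]

theorem insA_NN {t : Finset (ℕ × ℕ)} {x y X : ℕ} (ht : t ∈ NN (x + 3 + X) (y - 1))
    (hy : x + 4 + X ≤ y) : insA t x y X ∈ NN x y := by
  rw [mem_NN] at *
  obtain ⟨n, b⟩ := ht
  have l := n.lt
  refine ⟨⟨?_, ?_, ?_, ?_⟩, ?_⟩
  · simp only [mem_insA]; grind
  · intro p q q' h h'
    have := n.fn p q q'
    simp only [mem_insA] at h h'
    grind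
  · intro p p' q h h'
    have := n.inj p p' q
    simp only [mem_insA] at h h'
    grind
  · intro p q p' q' h h' hlt
    have := n.nc p q p' q'
    simp only [mem_insA] at h h'
    grind
  · simp only [mem_insA]; grind

theorem frag_shape {s : Finset (ℕ × ℕ)} {x y : ℕ} {X : Fin N} {m : Mono K Δ N}
    (hs : s ∈ NN x y) (hm : m.p.length = X) (h1 : Stp ℓ s (Sum.inr X : Δ ⊕ Fin N) x y)
    (h2 : Frg ℓ s (x + 1) X m) :
    (ℓ (x + 1) = m.a0 ∧ ℓ (x + 2) = m.a1 ∧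
      Chn ℓ ∅ (m.p.map Sum.inl : List (Δ ⊕ Fin N)) (x + 2) (x + 2 + X) ∧
      ℓ (x + 3 + X) = m.a2 ∧ ℓ y = m.b ∧ x + 4 + X ≤ y) ∧
    Chn ℓ s m.r (x + 3 + X) (y - 1) ∧
    ∀ p q, (p, q) ∈ s → (p = x + 1 ∧ q = y) ∨ (p = x + 2 ∧ q = x + 3 + X) ∨
      (x + 3 + X < p ∧ q ≤ y - 1) := by
  obtain ⟨n, b⟩ := mem_NN.1 hs
  obtain ⟨j, k1, k2, k3, k4, k5, k6, k7, k8⟩ := h2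
  have hj := n.fn _ _ _ k1 h1.1
  subst hj
  have k5 : Chn ℓ s (m.p.map Sum.inl : List (Δ ⊕ Fin N)) (x + 2) (x + 2 + X) := k5
  have k7 : Chn ℓ s m.r (x + 3 + X) (j - 1) := k7
  have k2 : (x + 2, x + 3 + X.val) ∈ s := k2
  have l7 := k7.le n
  refine ⟨⟨k3, k4, k5.to_empty n, k6, k8, by omega⟩, k7, ?_⟩
  intro p q hpq
  have hb := b p q hpq
  have hlt := n.lt p q hpq
  by_cases e1 : p = x + 1
  · subst e1; exact Or.inl ⟨rfl, n.fn _ _ _ hpq k1⟩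
  by_cases e2 : p = x + 2
  · subst e2; exact Or.inr (Or.inl ⟨rfl, n.fn _ _ _ hpq k2⟩)
  have e3 : ¬ (p ≤ x + 2 + X) := fun h => (k5.intl.2 p (by omega) h _ _ hpq).1 rfl
  have e4 : p ≠ x + 3 + X := by
    intro h
    have := n.nc _ _ _ _ k2 hpq (by omega)
    omega
  have e5 : q ≠ j := by
    intro h
    subst h
    have := n.inj _ _ _ hpq k1
    omega
  right; right; omega

theorem frag_sum {x y : ℕ} {X : Fin N} {m : Mono K Δ N} (hm : m.p.length = X) :
    open Classical in
    (∑ s ∈ NN x y, if Stp ℓ s (Sum.inr X : Δ ⊕ Fin N) x y ∧ Frg ℓ s (x + 1) X m then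
      ∏ k ∈ Finset.Ioc (x + 1) y, fw ℓ Q s k else 0) =
    if (ℓ (x + 1) = m.a0 ∧ ℓ (x + 2) = m.a1 ∧
      Chn ℓ ∅ (m.p.map Sum.inl : List (Δ ⊕ Fin N)) (x + 2) (x + 2 + X) ∧
      ℓ (x + 3 + X) = m.a2 ∧ ℓ y = m.b ∧ x + 4 + X ≤ y) then
      CC ℓ Q m.r (x + 3 + X) (y - 1) else 0 := by
  classical
  split_ifs with hc
  swap
  · apply Finset.sum_eq_zero
    intro s hs
    rw [if_neg]
    rintro ⟨h1, h2⟩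
    exact hc (frag_shape hs hm h1 h2).1
  obtain ⟨c0, c1, c2, c3, c4, c5⟩ := hc
  rw [CC, ← Finset.sum_filter, ← Finset.sum_filter]
  symm
  refine Finset.sum_bij' (fun t _ => insA t x y X)
    (fun s _ => s.filter (fun p => x + 3 + X < p.1 ∧ p.2 ≤ y - 1)) ?_ ?_ ?_ ?_ ?_
  · intro t ht
    rw [Finset.mem_filter] at ht ⊢
    obtain ⟨ht, hch⟩ := ht
    obtain ⟨n, b⟩ := mem_NN.1 ht
    refine ⟨insA_NN ht c5, ⟨by simp [mem_insA], by simp [mem_insA]⟩, y, by simp [mem_insA],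
      mem_insA.2 (Or.inr (Or.inl ⟨rfl, by omega⟩)), c0, c1, ?_, c3, ?_, c4⟩
    · refine Chn.agr nst_empty (x := x + 2) (y := x + 2 + X) ?_ c2
      intro p q hpq
      rw [mem_insA]
      have := b p q
      have := n.lt p q
      simp
      grind
    · refine Chn.agr n (x := x + 3 + X) ?_ hch
      intro p q hpq
      rw [mem_insA]
      grind
  · intro s hs
    rw [Finset.mem_filter] at hs ⊢
    obtain ⟨hs, h1, h2⟩ := hs
    obtain ⟨-, g2, g3⟩ := frag_shape hs hm h1 h2
    obtain ⟨n, b⟩ := mem_NN.1 hs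
    have nsub : ∀ t ⊆ s, Nst t := fun t ht => ⟨fun p q h => n.lt _ _ (ht h),
      fun p q q' h h' => n.fn _ _ _ (ht h) (ht h'), fun p q q' h h' => n.inj _ _ _ (ht h) (ht h'),
      fun p q p' q' h h' => n.nc _ _ _ _ (ht h) (ht h')⟩
    refine ⟨mem_NN.2 ⟨nsub _ (Finset.filter_subset _ _), by simp⟩, g2.agr n ?_⟩
    intro p q hpq
    simp only [Finset.mem_filter]
    have := g3 p q
    grind
  · intro t ht
    rw [Finset.mem_filter] at ht
    obtain ⟨n, b⟩ := mem_NN.1 ht.1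
    ext ⟨p, q⟩
    rw [Finset.mem_filter, mem_insA]
    have := b p q
    grind
  · intro s hs
    rw [Finset.mem_filter] at hs
    obtain ⟨hs, h1, h2⟩ := hs
    obtain ⟨-, g2, g3⟩ := frag_shape hs hm h1 h2
    ext ⟨p, q⟩
    rw [mem_insA, Finset.mem_filter]
    have := g3 p q
    have e1 : (x + 1, y) ∈ s := h1.1
    have e2 : (x + 2, x + 3 + X.val) ∈ s := h1.2
    grind
  · intro t ht
    rw [Finset.mem_filter] at ht
    have hN := insA_NN ht.1 c5
    obtain ⟨n, b⟩ := mem_NN.1 ht.1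
    have hlt := n.lt
    have hone : ∀ k, (x + 1 < k ∧ k ≤ x + 3 + X) ∨ k = y → fw ℓ Q (insA t x y X) k = 1 := by
      intro k hk
      rw [fw, if_neg]
      rintro ⟨⟨j, hj⟩, ⟨j', hj'⟩⟩
      rw [mem_insA] at hj hj'
      grind
    have hy1 : y - 1 ≤ y := by omega
    rw [← Finset.prod_Ioc_consecutive _ (show x + 1 ≤ x + 3 + X by omega)
      (show x + 3 + X ≤ y by omega),
      ← Finset.prod_Ioc_consecutive _ (show x + 3 + X ≤ y - 1 by omega) hy1]
    rw [Finset.prod_eq_one (s := Finset.Ioc (x + 1) (x + 3 + X)), one_mul,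
      Finset.prod_eq_one (s := Finset.Ioc (y - 1) y), mul_one]
    · refine Finset.prod_congr rfl fun k hk => ?_
      rw [Finset.mem_Ioc] at hk
      refine fw_agr n (mem_NN.1 hN).1 (x := x + 3 + X) (y := y - 1) ?_ ?_ hk.1 hk.2
      · intro p q hpq; rw [mem_insA]; grind
      · intro p q h1 h2 h3; exact (b p q h1).2
    · intro k hk
      rw [Finset.mem_Ioc] at hk
      exact hone k (by omega)
    · intro k hk
      rw [Finset.mem_Ioc] at hk
      exact hone k (by omega)

theorem C1_var (hQ : ∀ X, ∀ m ∈ Q X, m.p.length = X) (X : Fin N) (x y : ℕ) :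
    C1 ℓ Q (Sum.inr X) x y = ((Q X).map fun m => m.c * open Classical in
    (if (ℓ (x + 1) = m.a0 ∧ ℓ (x + 2) = m.a1 ∧
      Chn ℓ ∅ (m.p.map Sum.inl : List (Δ ⊕ Fin N)) (x + 2) (x + 2 + X) ∧
      ℓ (x + 3 + X) = m.a2 ∧ ℓ y = m.b ∧ x + 4 + X ≤ y) then
      CC ℓ Q m.r (x + 3 + X) (y - 1) else 0)).sum := by
  classical
  have h1 : ∀ m ∈ Q X, (m.c * 
    (if (ℓ (x + 1) = m.a0 ∧ ℓ (x + 2) = m.a1 ∧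
      Chn ℓ ∅ (m.p.map Sum.inl : List (Δ ⊕ Fin N)) (x + 2) (x + 2 + X) ∧
      ℓ (x + 3 + X) = m.a2 ∧ ℓ y = m.b ∧ x + 4 + X ≤ y) then
      CC ℓ Q m.r (x + 3 + X) (y - 1) else 0)) =
      ∑ s ∈ NN x y, if Stp ℓ s (Sum.inr X : Δ ⊕ Fin N) x y then
        (if Frg ℓ s (x + 1) X m then m.c else 0) * ∏ k ∈ Finset.Ioc (x + 1) y, fw ℓ Q s k
        else 0 := by
    intro m hm
    rw [← frag_sum Q (hQ X m hm), Finset.mul_sum]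
    refine Finset.sum_congr rfl fun s _ => ?_
    by_cases a1 : Stp ℓ s (Sum.inr X : Δ ⊕ Fin N) x y <;>
      by_cases a2 : Frg ℓ s (x + 1) X m <;> simp [a1, a2]
  rw [List.map_congr_left h1, C1]
  have h2 : ∀ L : List (Mono K Δ N), (L.map fun m => ∑ s ∈ NN x y,
      if Stp ℓ s (Sum.inr X : Δ ⊕ Fin N) x y then
        (if Frg ℓ s (x + 1) X m then m.c else 0) * ∏ k ∈ Finset.Ioc (x + 1) y, fw ℓ Q s k
        else 0).sum = ∑ s ∈ NN x y, if Stp ℓ s (Sum.inr X : Δ ⊕ Fin N) x y then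
        (L.map fun m => if Frg ℓ s (x + 1) X m then m.c else 0).sum *
          ∏ k ∈ Finset.Ioc (x + 1) y, fw ℓ Q s k else 0 := by
    intro L
    induction L with
    | nil => simp
    | cons m L ih =>
      simp only [List.map_cons, List.sum_cons, ih, add_mul]
      rw [← Finset.sum_add_distrib]
      refine Finset.sum_congr rfl fun s _ => ?_
      split_ifs <;> simp
  rw [h2]
  refine Finset.sum_congr rfl fun s hs => ?_
  split_ifs with hst
  swap
  · rfl
  obtain ⟨n, b⟩ := mem_NN.1 hs
  have hlt := hst.lt n
  rw [← Finset.prod_Ioc_consecutive _ (show x ≤ x + 1 by omega) (show x + 1 ≤ y by omega)]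
  congr 1
  rw [Nat.Ioc_succ_singleton, Finset.prod_singleton, fw, if_pos ⟨⟨_, hst.1⟩, ⟨_, hst.2⟩⟩]
  rw [Finset.sum_eq_single X]
  · intro X' _ hne
    apply List.sum_eq_zero
    intro c hc
    rw [List.mem_map] at hc
    obtain ⟨m, _, rfl⟩ := hc
    rw [if_neg]
    rintro ⟨j, k1, k2, _⟩
    have := n.fn _ _ _ k2 hst.2
    exact hne (Fin.ext (by omega))
  · simp

theorem C1_eq_zero (X : Fin N) {x y : ℕ} (h : y ≤ x) : C1 ℓ Q (Sum.inr X) x y = 0 := by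
  classical
  rw [C1]
  apply Finset.sum_eq_zero
  intro s hs
  rw [if_neg]
  intro h1
  have := h1.lt (mem_NN.1 hs).1
  omega

variable (ℓ) in
open Classical in
/-- Evaluation of a word over interval kernels. -/
noncomputable def cE {Y : Type} (n : ℕ) (v : Y → ℕ → ℕ → K) : List (Δ ⊕ Y) → ℕ → ℕ → K
  | [], x, y => if x = y then 1 else 0
  | Sum.inl a :: u, x, y => if ℓ (x + 1) = a ∧ x + 1 ≤ n then cE n v u (x + 1) y else 0
  | Sum.inr X :: u, x, y => ∑ z ∈ Finset.range (n + 1), v X x z * cE n v u z y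

/-- Strictly upper triangular kernels. -/
def SUp {Y : Type} (v : Y → ℕ → ℕ → K) : Prop := ∀ X x y, y ≤ x → v X x y = 0

theorem cE_zero {Y : Type} {n : ℕ} {v : Y → ℕ → ℕ → K} (hv : SUp v) (u : List (Δ ⊕ Y)) :
    ∀ x y, y < x → cE ℓ n v u x y = 0 := by
  classical
  induction u with
  | nil => intro x y h; rw [cE, if_neg (by omega)]
  | cons s u ih =>
    intro x y h
    cases s with
    | inl a => rw [cE, ih _ _ (by omega)]; simp
    | inr X =>
      rw [cE]
      apply Finset.sum_eq_zero
      intro z _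
      by_cases hz : z ≤ x
      · rw [hv _ _ _ hz, zero_mul]
      · rw [ih _ _ (by omega), mul_zero]

theorem cE_congr {Y : Type} {n : ℕ} {v v' : Y → ℕ → ℕ → K} (hv : SUp v) (hv' : SUp v')
    (u : List (Δ ⊕ Y)) (y : ℕ) : ∀ x, (∀ X x' y', x ≤ x' → y' ≤ y → v X x' y' = v' X x' y') →
    cE ℓ n v u x y = cE ℓ n v' u x y := by
  classical
  induction u with
  | nil => intro x h; rw [cE, cE]
  | cons s u ih =>
    intro x h
    cases s with
    | inl a => rw [cE, cE, ih _ fun X x' y' h1 h2 => h X x' y' (by omega) h2]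
    | inr X =>
      rw [cE, cE]
      refine Finset.sum_congr rfl fun z _ => ?_
      by_cases hz : z ≤ x
      · rw [hv _ _ _ hz, hv' _ _ _ hz, zero_mul, zero_mul]
      · by_cases hz2 : y < z
        · rw [cE_zero hv _ _ _ hz2, cE_zero hv' _ _ _ hz2, mul_zero, mul_zero]
        · rw [ih z fun X x' y' h1 h2 => h X x' y' (by omega) h2, h X x z le_rfl (by omega)]

theorem cE_last {Y : Type} {n : ℕ} {v : Y → ℕ → ℕ → K} (u : List (Δ ⊕ Y)) (b : Δ) (y : ℕ)
    (hy : y ≤ n) (hy1 : 1 ≤ y) : ∀ x, cE ℓ n v (u ++ [Sum.inl b]) x y =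
      open Classical in if ℓ y = b then cE ℓ n v u x (y - 1) else 0 := by
  classical
  induction u with
  | nil =>
    intro x
    simp only [List.nil_append, cE]
    by_cases h : x + 1 = y
    · subst h; simp [hy]
    · have : x ≠ y - 1 := by omega
      simp [h, this]
  | cons s u ih =>
    intro x
    cases s with
    | inl a =>
      simp only [List.cons_append, cE]
      rw [ih]
      split_ifs <;> rfl
    | inr X =>
      simp only [List.cons_append, cE]
      simp only [ih]
      split_ifs <;> simp

theorem cE_letters {n : ℕ} {v : Fin N → ℕ → ℕ → K} (p : List Δ) (u : List (Δ ⊕ Fin N)) (y : ℕ) :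
    ∀ x, cE ℓ n v (p.map Sum.inl ++ u) x y =
      open Classical in if Chn ℓ ∅ (p.map Sum.inl : List (Δ ⊕ Fin N)) x (x + p.length) ∧
        (p = [] ∨ x + p.length ≤ n) then cE ℓ n v u (x + p.length) y else 0 := by
  classical
  induction p with
  | nil => intro x; simp [Chn]
  | cons a p ih =>
    intro x
    simp only [List.map_cons, List.cons_append, cE, ih]
    have e : x + 1 + p.length = x + (a :: p).length := by simp; omega
    rw [e]
    by_cases h1 : ℓ (x + 1) = a ∧ x + 1 ≤ n
    · rw [if_pos h1]
      refine if_congr ?_ rfl rfl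
      simp only [Chn, Stp, Intl]
      constructor
      · rintro ⟨h2, h3⟩
        refine ⟨⟨x + 1, ⟨rfl, by simp, h1.1⟩, h2⟩, Or.inr ?_⟩
        rcases h3 with rfl | h3
        · simpa using h1.2
        · exact h3
      · rintro ⟨⟨z, ⟨rfl, -, h4⟩, h2⟩, h3⟩
        refine ⟨h2, Or.inr ?_⟩
        rcases h3 with h3 | h3
        · simp at h3
        · exact h3
    · rw [if_neg h1, if_neg]
      rintro ⟨⟨z, ⟨rfl, -, h4⟩, h2⟩, h3⟩
      apply h1
      refine ⟨h4, ?_⟩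
      simp at h3
      omega

theorem CC_eq_cE (n : ℕ) (u : List (Δ ⊕ Fin N)) (y : ℕ) (hy : y ≤ n) : ∀ x, x ≤ n →
    CC ℓ Q u x y = cE ℓ n (fun X => C1 ℓ Q (Sum.inr X)) u x y := by
  classical
  have hS : SUp fun X => C1 ℓ Q (Sum.inr X) := fun X x y h => C1_eq_zero Q X h
  induction u with
  | nil => intro x _; rw [CC_nil, cE]
  | cons s u ih =>
    intro x hx
    rw [CC_cons]
    cases s with
    | inl a =>
      rw [cE]
      simp only [C1_letter]
      by_cases h : x + 1 ≤ y
      · rw [Finset.sum_eq_single (x + 1)]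
        · rw [ih _ (by omega)]
          have : x + 1 ≤ n := by omega
          simp [this]
        · intro z _ hz
          simp [hz]
        · intro hz
          exact absurd (Finset.mem_Ioc.2 ⟨by omega, h⟩) hz
      · rw [Finset.Ioc_eq_empty (by omega), cE_zero hS _ _ _ (by omega)]; simp
    | inr X =>
      rw [cE]
      have hsub : Finset.Ioc x y ⊆ Finset.range (n + 1) := by
        intro z hz; rw [Finset.mem_Ioc] at hz; rw [Finset.mem_range]; omega
      rw [← Finset.sum_subset hsub]
      · refine Finset.sum_congr rfl fun z hz => ?_
        rw [Finset.mem_Ioc] at hz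
        rw [ih _ (by omega)]
      · intro z hz hz2
        rw [Finset.mem_Ioc] at hz2
        by_cases h : z ≤ x
        · rw [C1_eq_zero _ _ h, zero_mul]
        · rw [cE_zero hS _ _ _ (by omega), mul_zero]

theorem cE_word {n : ℕ} {v : Fin N → ℕ → ℕ → K} (hv : SUp v) {X : Fin N} {m : Mono K Δ N}
    (hm : m.p.length = X) (x y : ℕ) (hy : y ≤ n) :
    cE ℓ n v m.word x y = open Classical in
    (if (ℓ (x + 1) = m.a0 ∧ ℓ (x + 2) = m.a1 ∧
      Chn ℓ ∅ (m.p.map Sum.inl : List (Δ ⊕ Fin N)) (x + 2) (x + 2 + X) ∧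
      ℓ (x + 3 + X) = m.a2 ∧ ℓ y = m.b ∧ x + 4 + X ≤ y) then
      cE ℓ n v m.r (x + 3 + X) (y - 1) else 0) := by
  classical
  by_cases hxy : x + 4 + X ≤ y
  · rw [Mono.word, cE, cE, cE_letters, cE, cE_last _ _ _ hy (by omega), hm]
    have e : x + 1 + 1 + X + 1 = x + 3 + X := by omega
    rw [e]
    have i1 : x + 1 ≤ n := by omega
    have i2 : x + 1 + 1 ≤ n := by omega
    have i3 : x + 1 + 1 + X ≤ n := by omega
    have i4 : x + 3 + X ≤ n := by omega
    simp only [i1, i2, i3, i4, or_true, and_true, hxy, ← ite_and]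
  · rw [if_neg (by tauto)]
    by_cases h0 : y = 0
    · subst h0
      rw [Mono.word, cE, cE_zero hv _ _ _ (by omega)]; simp
    · rw [Mono.word, cE, cE, cE_letters, cE, cE_last _ _ _ hy (by omega), hm,
        cE_zero hv _ _ _ (by omega)]
      simp

theorem kernel_unique (hQ : ∀ X, ∀ m ∈ Q X, m.p.length = X) (n : ℕ) (v : Fin N → ℕ → ℕ → K)
    (hv : SUp v) (hs : ∀ X x y, x ≤ n → y ≤ n →
      v X x y = ((Q X).map fun m => m.c * cE ℓ n v m.word x y).sum) :
    ∀ X x y, x ≤ n → y ≤ n → v X x y = C1 ℓ Q (Sum.inr X) x y := by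
  classical
  have hS : SUp fun X => C1 ℓ Q (Sum.inr X) := fun X x y h => C1_eq_zero Q X h
  have key : ∀ d X x y, x ≤ n → y ≤ n → y - x ≤ d → v X x y = C1 ℓ Q (Sum.inr X) x y := by
    intro d
    induction d with
    | zero => intro X x y hx hy hd; rw [hv _ _ _ (by omega), C1_eq_zero _ _ (by omega)]
    | succ d ih =>
      intro X x y hx hy hd
      rw [hs X x y hx hy, C1_var Q hQ]
      refine congrArg _ (List.map_congr_left fun m hm => ?_)
      rw [cE_word hv (hQ X m hm) x y hy]
      congr 1
      split_ifs with hc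
      · have h4 := hc.2.2.2.2.2
        rw [CC_eq_cE Q n m.r (y - 1) (by omega) _ (by omega)]
        refine cE_congr hv hS _ _ _ fun X' x' y' h1 h2 => ?_
        by_cases h3 : y' ≤ x'
        · rw [hv _ _ _ h3]; exact (C1_eq_zero _ _ h3).symm
        · exact ih X' x' y' (by omega) (by omega) (by omega)
      · rfl
  intro X x y hx hy
  exact key _ X x y hx hy le_rfl
end

section
variable {Δ K : Type} [CommSemiring K]

/-- Upper triangular matrices. -/
abbrev UT (K : Type) [CommSemiring K] (n : ℕ) : Type := IncidenceAlgebra K (Fin (n + 1))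

/-- The superdiagonal filtration on upper triangular matrices. -/
def utFilt (K : Type) [CommSemiring K] (n : ℕ) : Filt K (UT K n) where
  F k :=
    { carrier := {A | ∀ i j, ¬ (i.val + k ≤ j.val) → A i j = 0}
      add_mem' := by
        intro A B hA hB i j h
        rw [IncidenceAlgebra.add_apply, hA i j h, hB i j h, add_zero]
      zero_mem' := by intro i j _; rfl
      smul_mem' := by
        intro c A hA i j h
        rw [IncidenceAlgebra.constSMul_apply, hA i j h, smul_zero] }
  mul := by
    intro i j A B hA hB x y h
    rw [IncidenceAlgebra.mul_apply]
    apply Finset.sum_eq_zero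
    intro z _
    by_cases hz : x.val + i ≤ z.val
    · rw [hB z y (by omega), mul_zero]
    · rw [hA x z hz, zero_mul]
  anti := by intro i j hij A hA x y h; exact hA x y (by omega)
  top := by
    intro A x y h
    exact IncidenceAlgebra.apply_eq_zero_of_not_le (fun h2 => h (by simpa using h2)) A
  n := n + 1
  nil := by
    intro A hA
    apply IncidenceAlgebra.ext
    intro x y _
    exact hA x y (by have := y.2; omega)

theorem ut_mul {n : ℕ} (A B : UT K n) (i j : Fin (n + 1)) : (A * B) i j = ∑ z, A i z * B z j := by
  rw [IncidenceAlgebra.mul_apply]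
  apply Finset.sum_subset (Finset.subset_univ _)
  intro z _ hz
  rw [Finset.mem_Icc, not_and_or] at hz
  rcases hz with h | h
  · rw [IncidenceAlgebra.apply_eq_zero_of_not_le h, zero_mul]
  · rw [IncidenceAlgebra.apply_eq_zero_of_not_le h, mul_zero]

open Classical in
/-- The matrix of a letter. -/
noncomputable def utA (K : Type) [CommSemiring K] (ℓ : ℕ → Δ) (n : ℕ) (a : Δ) : UT K n :=
  IncidenceAlgebra.mk (fun i j => if j.val = i.val + 1 ∧ ℓ j.val = a then 1 else 0)
    (fun i j h => if_neg (fun h2 => h (by rw [Fin.le_def]; omega)))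

/-- Entries of a family of matrices. -/
noncomputable def utV {Y : Type} {n : ℕ} (V : Y → UT K n) (X : Y) (x y : ℕ) : K :=
  if h : x < n + 1 ∧ y < n + 1 then V X ⟨x, h.1⟩ ⟨y, h.2⟩ else 0

theorem ut_prod {Y : Type} (ℓ : ℕ → Δ) (n : ℕ) (V : Y → UT K n) (u : List (Δ ⊕ Y))
    (i j : Fin (n + 1)) :
    (u.map (Sum.elim (utA K ℓ n) V)).prod i j = cE ℓ n (utV V) u i j := by
  classical
  induction u generalizing i with
  | nil => simp [cE, Fin.ext_iff, IncidenceAlgebra.one_apply]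
  | cons σ u ih =>
    rw [List.map_cons, List.prod_cons, ut_mul]
    rcases σ with a | X
    · simp only [cE, Sum.elim_inl, ih]
      by_cases h : i.val + 1 ≤ n
      · rw [Finset.sum_eq_single (⟨i.val + 1, by omega⟩ : Fin (n + 1))]
        · simp [utA, h]
        · intro b _ hb
          simp only [utA, IncidenceAlgebra.coe_mk]
          rw [if_neg, zero_mul]
          intro h2
          exact hb (Fin.ext h2.1)
        · simp
      · rw [if_neg (fun h2 => h h2.2)]
        apply Finset.sum_eq_zero
        intro z _
        simp only [utA, IncidenceAlgebra.coe_mk]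
        rw [if_neg, zero_mul]
        intro h2
        have := z.2
        omega
    · simp only [cE, Sum.elim_inr, ih]
      rw [← Fin.sum_univ_eq_sum_range (fun z => utV V X i z * cE ℓ n (utV V) u z j)]
      apply Finset.sum_congr rfl
      intro z _
      congr 1
      have h1 := i.2
      have h2 := z.2
      rw [utV, dif_pos ⟨h1, h2⟩]

theorem ut_sum {ι : Type} {n : ℕ} (L : List ι) (f : ι → UT K n) (i j : Fin (n + 1)) :
    (L.map f).sum i j = (L.map fun t => f t i j).sum := by
  induction L with
  | nil => rfl
  | cons t L ih => simp only [List.map_cons, List.sum_cons, IncidenceAlgebra.add_apply, ih]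

/-- Word series in terms of intervals of a fixed word. -/
theorem wordSeries_cE {Y : Type} (w : List Δ) (ℓ : ℕ → Δ)
    (hℓ : ∀ i (h : i < w.length), ℓ (i + 1) = w[i]) (Sol : Y → List Δ → K)
    (h0 : ∀ y, Sol y [] = 0) (v : Y → ℕ → ℕ → K)
    (hv : ∀ X x y, v X x y = if x < y ∧ y ≤ w.length then Sol X ((w.drop x).take (y - x)) else 0)
    (u : List (Δ ⊕ Y)) (x y : ℕ) (hxy : x ≤ y) (hy : y ≤ w.length) :
    wordSeries Sol u ((w.drop x).take (y - x)) = cE ℓ w.length v u x y := by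
  classical
  have hlen : ∀ x y, y ≤ w.length → ((w.drop x).take (y - x)).length = y - x := by
    intro x y h; simp; omega
  have hup : SUp v := by
    intro X x y h
    rw [hv, if_neg (by omega)]
  induction u generalizing x with
  | nil =>
    simp only [wordSeries, cE]
    congr 1
    rw [← List.length_eq_zero_iff, hlen x y hy]
    apply propext
    omega
  | cons σ u ih =>
    rcases σ with a | X
    · by_cases hx : x = y
      · subst hx
        simp only [Nat.sub_self, List.take_zero, wordSeries]
        rw [cE]
        split_ifs
        · rw [cE_zero hup _ _ _ (by omega)]
        · rfl
      · have e : (w.drop x).take (y - x) = w[x]'(by omega) :: (w.drop (x + 1)).take (y - (x + 1)) := by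
          rw [List.drop_eq_getElem_cons (by omega), show y - x = (y - (x + 1)) + 1 by omega,
            List.take_succ_cons]
        rw [e, cE]
        simp only [wordSeries]
        rw [hℓ x (by omega), ih (x + 1) (by omega)]
        have : x + 1 ≤ w.length := by omega
        simp [this]
    · simp only [wordSeries, cE]
      rw [hlen x y hy]
      have e1 : ∑ z ∈ Finset.range (w.length + 1), v X x z * cE ℓ w.length v u z y
          = ∑ z ∈ Finset.Ico x (y + 1), v X x z * cE ℓ w.length v u z y := by
        symm
        apply Finset.sum_subset
        · intro z hz; simp at *; omega
        · intro z hz hz2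
          simp at hz hz2
          by_cases h : x ≤ z
          · rw [cE_zero hup _ _ _ (by have := hz2 h; omega), mul_zero]
          · rw [hup _ _ _ (by omega), zero_mul]
      rw [e1, Finset.sum_Ico_eq_sum_range, show y + 1 - x = y - x + 1 by omega]
      apply Finset.sum_congr rfl
      intro k hk
      rw [Finset.mem_range] at hk
      rw [List.take_take, min_eq_left (by omega), List.drop_take, List.drop_drop,
        show y - x - k = y - (x + k) by omega, ih (x + k) (by omega), hv]
      congr 1
      by_cases hk0 : k = 0
      · subst hk0; simp [h0]
      · rw [if_pos (by omega), show x + k - x = k by omega]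

theorem alg_link (S : List Δ → K) (hS : IsAlgebraicSeries K Δ S) :
    S [] = 0 ∧ ∃ (N : ℕ) (Q : Fin N → List (Mono K Δ N)) (T : List (K × List Δ)) (y0 : Fin N),
      (∀ X, ∀ m ∈ Q X, m.p.length = X) ∧ (∀ t ∈ T, t.2 ≠ []) ∧
      ∀ w : List Δ, w ≠ [] → ∀ ℓ : ℕ → Δ, (∀ i (h : i < w.length), ℓ (i + 1) = w[i]) →
        S w = (T.map fun t => t.1 * cE ℓ w.length (fun (_ : Fin N) _ _ => (0 : K))
            (t.2.map Sum.inl) 0 w.length).sum + C1 ℓ Q (Sum.inr y0) 0 w.length := by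
  classical
  obtain ⟨Y, _, P, Sol, hfin, hprop, hsol, h0, x0, hx0⟩ := hS
  refine ⟨by rw [hx0, h0], ?_⟩
  let P' : Y → NPoly K Δ Y := fun x => (hfin x).toFinset.toList.map fun u => (P x u, u)
  have hP' : Prop1 P' := by
    intro x m hm
    simp only [P', List.mem_map, Finset.mem_toList, Set.Finite.mem_toFinset,
      Function.mem_support] at hm
    obtain ⟨u, hu, rfl⟩ := hm
    refine ⟨?_, fun z hz => ?_⟩
    · rintro h; simp only at h; subst h; exact hu (hprop x).1
    · simp only at hz; subst hz; exact hu ((hprop x).2 z)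
  obtain ⟨N, Q, T, y0, hQ, hT, H⟩ := normal_form P' hP' x0
  refine ⟨N, Q, T, y0, hQ, hT, ?_⟩
  intro w hw ℓ hℓ
  set n := w.length with hn
  have hnpos : 0 < n := List.length_pos_iff.2 hw
  let v : Y → ℕ → ℕ → K := fun X x y =>
    if x < y ∧ y ≤ w.length then Sol X ((w.drop x).take (y - x)) else 0
  let V : Y → UT K n := fun X => IncidenceAlgebra.mk (fun i j => v X i j) (by
    intro i j h
    simp only [v]
    rw [if_neg]
    intro h2
    exact h (by rw [Fin.le_def]; omega))
  have hvV : utV V = v := by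
    funext X x y
    simp only [utV, V, IncidenceAlgebra.coe_mk]
    split_ifs with h
    · rfl
    · simp only [v]; rw [if_neg]; omega
  have hSolves : Solves P' (utA K ℓ n) V := by
    intro x
    apply IncidenceAlgebra.ext
    intro i j hij
    rw [evP, ut_sum]
    simp only [IncidenceAlgebra.constSMul_apply, ut_prod, hvV]
    simp only [P', List.map_map, Function.comp_def, Finset.sum_map_toList]
    have hji : j.val ≤ w.length := by have := j.2; omega
    have e := hsol x ((w.drop i).take (j - i))
    rw [finsum_eq_sum_of_support_subset (s := (hfin x).toFinset)] at e
    · have e2 : (V x) i j = Sol x ((w.drop i).take (j - i)) := by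
        simp only [V, IncidenceAlgebra.coe_mk, v]
        rw [Fin.le_def] at hij
        split_ifs with h
        · rfl
        · rw [show j.val - i.val = 0 by omega, List.take_zero, h0]
      rw [e2, e]
      apply Finset.sum_congr rfl
      intro u _
      rw [wordSeries_cE w ℓ hℓ Sol h0 v (fun _ _ _ => rfl) u i j hij hji, smul_eq_mul]
    · intro u hu
      simp only [Set.Finite.coe_toFinset, Function.mem_support] at *
      exact left_ne_zero_of_mul hu
  obtain ⟨V', hV'1, hV'2, hV'3⟩ := H (UT K n) (utFilt K n) (utA K ℓ n) V
    (by
      intro a i j h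
      simp only [utA, IncidenceAlgebra.coe_mk]
      rw [if_neg]; omega)
    (by
      intro X i j h
      simp only [V, IncidenceAlgebra.coe_mk, v]
      rw [if_neg]; omega) hSolves
  have hup : SUp (utV V') := by
    intro X x y h
    rw [utV]
    split_ifs with h2
    · exact hV'1 X _ _ (by simp only; omega)
    · rfl
  have key := kernel_unique (ℓ := ℓ) Q hQ n (utV V') hup (by
    intro X x y hx hy
    rw [utV, dif_pos ⟨by omega, by omega⟩, hV'2, ut_sum]
    simp only [IncidenceAlgebra.constSMul_apply, ut_prod, smul_eq_mul])
  have fin := congrArg (fun A : UT K n => A ⟨0, by omega⟩ ⟨n, by omega⟩) hV'3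
  simp only [IncidenceAlgebra.add_apply] at fin
  rw [ut_sum] at fin
  have e1 : V x0 ⟨0, by omega⟩ ⟨n, by omega⟩ = S w := by
    simp only [V, IncidenceAlgebra.coe_mk, v]
    rw [if_pos ⟨hnpos, le_rfl⟩, hx0]
    simp [hn]
  have e2 : V' y0 ⟨0, by omega⟩ ⟨n, by omega⟩ = C1 ℓ Q (Sum.inr y0) 0 n := by
    rw [← key y0 0 n (by omega) le_rfl, utV, dif_pos ⟨by omega, by omega⟩]
  rw [← e1, fin, e2]
  congr 2
  apply List.map_congr_left
  intro t _
  rw [IncidenceAlgebra.constSMul_apply, smul_eq_mul]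
  congr 1
  have e3 : t.2.map (utA K ℓ n) = (t.2.map Sum.inl).map
      (Sum.elim (utA K ℓ n) (fun _ : Fin N => (0 : UT K n))) := by
    simp [List.map_map, Function.comp_def]
  rw [e3, ut_prod]
  congr 1
  funext X x y
  simp [utV]
end

/-! ### Part D: first-order definability -/
section
variable {Δ : Type}

/-- A relation on positions is first-order definable. -/
def Dfn (k : ℕ) (R : NestedWord Δ → (Fin k → ℕ) → Prop) : Prop :=
  ∀ xs : Fin k → ℕ, ∃ ψ : MSOF Δ, ψ.FO ∧ (∀ z ∈ ψ.fv, ∃ i, xs i = z) ∧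
    ∀ nw γ, (∀ i, γ (xs i) ∈ Finset.Icc 1 nw.len) →
      (ψ.Holds nw γ ↔ R nw (fun i => γ (xs i)))

theorem Dfn.congr {k : ℕ} {R R' : NestedWord Δ → (Fin k → ℕ) → Prop} (h : Dfn k R)
    (e : ∀ nw v, (∀ i, v i ∈ Finset.Icc 1 nw.len) → (R nw v ↔ R' nw v)) : Dfn k R' := by
  intro xs
  obtain ⟨ψ, h1, h2, h3⟩ := h xs
  exact ⟨ψ, h1, h2, fun nw γ hγ => (h3 nw γ hγ).trans (e nw _ hγ)⟩

theorem Dfn.reindex {k l : ℕ} {R : NestedWord Δ → (Fin k → ℕ) → Prop} (h : Dfn k R)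
    (f : Fin k → Fin l) : Dfn l (fun nw v => R nw (fun i => v (f i))) := by
  intro xs
  obtain ⟨ψ, h1, h2, h3⟩ := h (fun i => xs (f i))
  refine ⟨ψ, h1, fun z hz => ?_, fun nw γ hγ => h3 nw γ fun i => hγ (f i)⟩
  obtain ⟨i, hi⟩ := h2 z hz
  exact ⟨f i, hi⟩

theorem Dfn.not {k : ℕ} {R : NestedWord Δ → (Fin k → ℕ) → Prop} (h : Dfn k R) :
    Dfn k (fun nw v => ¬ R nw v) := by
  intro xs
  obtain ⟨ψ, h1, h2, h3⟩ := h xs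
  exact ⟨.not ψ, h1, h2, fun nw γ hγ => not_congr (h3 nw γ hγ)⟩

theorem Dfn.and {k : ℕ} {R R' : NestedWord Δ → (Fin k → ℕ) → Prop} (h : Dfn k R)
    (h' : Dfn k R') : Dfn k (fun nw v => R nw v ∧ R' nw v) := by
  intro xs
  obtain ⟨ψ, h1, h2, h3⟩ := h xs
  obtain ⟨ψ', h1', h2', h3'⟩ := h' xs
  refine ⟨.and ψ ψ', ⟨h1, h1'⟩, fun z hz => ?_, fun nw γ hγ => and_congr (h3 nw γ hγ) (h3' nw γ hγ)⟩
  rcases Finset.mem_union.1 hz with hz | hz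
  · exact h2 z hz
  · exact h2' z hz

theorem Dfn.ex {k : ℕ} {R : NestedWord Δ → (Fin (k + 1) → ℕ) → Prop} (h : Dfn (k + 1) R) :
    Dfn k (fun nw v => ∃ z ∈ Finset.Icc 1 nw.len, R nw (Fin.cons z v)) := by
  intro xs
  let f : ℕ := (∑ i, xs i) + 1
  have hf : ∀ i, xs i ≠ f := by
    intro i
    have := Finset.single_le_sum (f := xs) (fun _ _ => Nat.zero_le _) (Finset.mem_univ i)
    simp only [f]; omega
  obtain ⟨ψ, h1, h2, h3⟩ := h (Fin.cons f xs)
  refine ⟨.exF f ψ, h1, fun z hz => ?_, fun nw γ hγ => ?_⟩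
  · obtain ⟨hz1, hz2⟩ := Finset.mem_erase.1 hz
    obtain ⟨i, hi⟩ := h2 z hz2
    revert hi
    refine Fin.cases ?_ ?_ i
    · intro hi; exact absurd hi.symm hz1
    · intro j hj; exact ⟨j, hj⟩
  · simp only [MSOF.Holds]
    apply exists_congr
    intro z
    apply and_congr_right
    intro hz
    have e : (fun i => Function.update γ f z ((Fin.cons f xs : Fin (k + 1) → ℕ) i))
        = Fin.cons z (fun i => γ (xs i)) := by
      funext i
      refine Fin.cases ?_ ?_ i
      · simp
      · intro j; simp [hf j]
    rw [h3, e]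
    intro i
    refine Fin.cases ?_ ?_ i
    · simpa using hz
    · intro j; simpa [hf j] using hγ j

/-- Unary relations. -/
def D1 (R : NestedWord Δ → ℕ → Prop) : Prop := Dfn 1 (fun nw v => R nw (v 0))
/-- Binary relations. -/
def D2 (R : NestedWord Δ → ℕ → ℕ → Prop) : Prop := Dfn 2 (fun nw v => R nw (v 0) (v 1))

theorem D2.le : D2 (fun (_ : NestedWord Δ) i j => i ≤ j) := fun xs =>
  ⟨.lev (xs 0) (xs 1), trivial, by
    intro z hz; simp [MSOF.fv] at hz; rcases hz with h | h <;> exact ⟨_, h.symm⟩,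
    fun nw γ _ => Iff.rfl⟩

theorem D2.eq : D2 (fun (_ : NestedWord Δ) i j => i = j) := fun xs =>
  ⟨.eqv (xs 0) (xs 1), trivial, by
    intro z hz; simp [MSOF.fv] at hz; rcases hz with h | h <;> exact ⟨_, h.symm⟩,
    fun nw γ _ => Iff.rfl⟩

theorem D2.rel : D2 (fun (nw : NestedWord Δ) i j => nw.rel i j) := fun xs =>
  ⟨.nuv (xs 0) (xs 1), trivial, by
    intro z hz; simp [MSOF.fv] at hz; rcases hz with h | h <;> exact ⟨_, h.symm⟩,
    fun nw γ _ => Iff.rfl⟩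

theorem D1.lab (a : Δ) : D1 (fun (nw : NestedWord Δ) i => nw.letter i = a) := fun xs =>
  ⟨.lab a (xs 0), trivial, by
    intro z hz; simp [MSOF.fv] at hz; exact ⟨_, hz.symm⟩,
    fun nw γ _ => Iff.rfl⟩

theorem D2.swap {R : NestedWord Δ → ℕ → ℕ → Prop} (h : D2 R) : D2 (fun nw i j => R nw j i) :=
  Dfn.reindex (k := 2) (l := 2) h ![1, 0]

theorem D2.not {R : NestedWord Δ → ℕ → ℕ → Prop} (h : D2 R) : D2 (fun nw i j => ¬ R nw i j) :=
  Dfn.not h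

theorem D2.and {R R' : NestedWord Δ → ℕ → ℕ → Prop} (h : D2 R) (h' : D2 R') :
    D2 (fun nw i j => R nw i j ∧ R' nw i j) := Dfn.and h h'

theorem D1.not {R : NestedWord Δ → ℕ → Prop} (h : D1 R) : D1 (fun nw i => ¬ R nw i) :=
  Dfn.not h

theorem D1.and {R R' : NestedWord Δ → ℕ → Prop} (h : D1 R) (h' : D1 R') :
    D1 (fun nw i => R nw i ∧ R' nw i) := Dfn.and h h'

theorem D1.fst {R : NestedWord Δ → ℕ → Prop} (h : D1 R) : D2 (fun nw i _ => R nw i) :=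
  Dfn.reindex (k := 1) (l := 2) h ![0]

theorem D1.snd {R : NestedWord Δ → ℕ → Prop} (h : D1 R) : D2 (fun nw _ j => R nw j) :=
  Dfn.reindex (k := 1) (l := 2) h ![1]

theorem D2.ex {R : NestedWord Δ → ℕ → ℕ → Prop} (h : D2 R) :
    D1 (fun nw i => ∃ z ∈ Finset.Icc 1 nw.len, R nw i z) :=
  Dfn.ex (k := 1) h.swap

theorem D2.comp {A B : NestedWord Δ → ℕ → ℕ → Prop} (h : D2 A) (h' : D2 B) :
    D2 (fun nw i j => ∃ z ∈ Finset.Icc 1 nw.len, A nw i z ∧ B nw z j) :=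
  Dfn.ex (k := 2) (Dfn.and (Dfn.reindex (k := 2) (l := 3) h ![1, 0])
    (Dfn.reindex (k := 2) (l := 3) h' ![0, 2]))

theorem D1.ex {R : NestedWord Δ → ℕ → Prop} (h : D1 R) :
    Dfn 0 (fun nw _ => ∃ z ∈ Finset.Icc 1 nw.len, R nw z) :=
  Dfn.ex (k := 0) h

theorem D1.congr {R R' : NestedWord Δ → ℕ → Prop} (h : D1 R)
    (e : ∀ nw i, 1 ≤ i → i ≤ nw.len → (R nw i ↔ R' nw i)) : D1 R' :=
  Dfn.congr h fun nw v hv => e nw (v 0) (Finset.mem_Icc.1 (hv 0)).1 (Finset.mem_Icc.1 (hv 0)).2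

theorem D2.congr {R R' : NestedWord Δ → ℕ → ℕ → Prop} (h : D2 R)
    (e : ∀ nw i j, 1 ≤ i → i ≤ nw.len → 1 ≤ j → j ≤ nw.len → (R nw i j ↔ R' nw i j)) : D2 R' :=
  Dfn.congr h fun nw v hv => e nw (v 0) (v 1) (Finset.mem_Icc.1 (hv 0)).1
    (Finset.mem_Icc.1 (hv 0)).2 (Finset.mem_Icc.1 (hv 1)).1 (Finset.mem_Icc.1 (hv 1)).2

theorem D2.lt : D2 (fun (_ : NestedWord Δ) i j => i < j) :=
  D2.le.swap.not.congr fun _ i j _ _ _ _ => by omega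

theorem D2.succ : D2 (fun (_ : NestedWord Δ) i j => j = i + 1) :=
  (D2.lt.and (D2.lt.comp D2.lt).not).congr fun nw i j _ _ _ _ => by
    constructor
    · rintro ⟨h1, h2⟩
      by_contra h3
      exact h2 ⟨i + 1, Finset.mem_Icc.2 ⟨by omega, by omega⟩, by omega, by omega⟩
    · rintro rfl
      exact ⟨by omega, fun ⟨z, _, h1, h2⟩ => by omega⟩

theorem D2.dist (d : ℕ) : D2 (fun (_ : NestedWord Δ) i j => j = i + d) := by
  induction d with
  | zero => exact D2.eq.swap.congr fun _ _ _ _ _ _ _ => by simp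
  | succ d ih =>
    refine (ih.comp D2.succ).congr fun nw i j _ _ _ _ => ?_
    constructor
    · rintro ⟨z, _, rfl, rfl⟩; omega
    · rintro rfl
      exact ⟨i + d, Finset.mem_Icc.2 ⟨by omega, by omega⟩, rfl, by omega⟩

theorem D1.first : D1 (fun (_ : NestedWord Δ) i => i = 1) :=
  (D2.ex D2.lt.swap).not.congr fun nw i h1 h2 => by
    constructor
    · intro h
      by_contra h3
      exact h ⟨1, Finset.mem_Icc.2 ⟨by omega, by omega⟩, by omega⟩
    · rintro rfl ⟨z, hz, h3⟩
      have := Finset.mem_Icc.1 hz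
      omega

theorem D1.last : D1 (fun (nw : NestedWord Δ) i => i = nw.len) :=
  (D2.ex D2.lt).not.congr fun nw i h1 h2 => by
    constructor
    · intro h
      by_contra h3
      exact h ⟨nw.len, Finset.mem_Icc.2 ⟨by omega, by omega⟩, by omega⟩
    · rintro rfl ⟨z, hz, h3⟩
      have := Finset.mem_Icc.1 hz
      omega

/-- Shifting the argument of a unary relation. -/
theorem D1.shift {R : NestedWord Δ → ℕ → Prop} (h : D1 R) (d : ℕ) :
    D1 (fun nw i => i + d ≤ nw.len ∧ R nw (i + d)) :=
  (D2.ex ((D2.dist d).and h.snd)).congr fun nw i h1 h2 => by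
    constructor
    · rintro ⟨z, hz, rfl, h3⟩; exact ⟨(Finset.mem_Icc.1 hz).2, h3⟩
    · rintro ⟨h3, h4⟩; exact ⟨i + d, Finset.mem_Icc.2 ⟨by omega, h3⟩, rfl, h4⟩

theorem D2.shift {R : NestedWord Δ → ℕ → ℕ → Prop} (h : D2 R) (d : ℕ) :
    D2 (fun nw i j => i + d ≤ nw.len ∧ R nw (i + d) j) :=
  ((D2.dist d).comp h).congr fun nw i j h1 h2 _ _ => by
    constructor
    · rintro ⟨z, hz, rfl, h3⟩; exact ⟨(Finset.mem_Icc.1 hz).2, h3⟩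
    · rintro ⟨h3, h4⟩; exact ⟨i + d, Finset.mem_Icc.2 ⟨by omega, h3⟩, rfl, h4⟩

theorem D2.diag {R : NestedWord Δ → ℕ → ℕ → Prop} (h : D2 R) (d e : ℕ) :
    D1 (fun nw i => i + d ≤ nw.len ∧ i + e ≤ nw.len ∧ R nw (i + d) (i + e)) :=
  (D2.ex ((D2.dist e).and (h.shift d))).congr fun nw i h1 h2 => by
    constructor
    · rintro ⟨z, hz, rfl, h3, h4⟩; exact ⟨h3, (Finset.mem_Icc.1 hz).2, h4⟩
    · rintro ⟨h3, h4, h5⟩; exact ⟨i + e, Finset.mem_Icc.2 ⟨by omega, h4⟩, rfl, h3, h5⟩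

/-! The arcs of a nested word. -/

open Classical in
/-- Arc set. -/
noncomputable def NestedWord.arcs (nw : NestedWord Δ) : Finset (ℕ × ℕ) :=
  (Finset.Icc 1 nw.len ×ˢ Finset.Icc 1 nw.len).filter fun p => nw.rel p.1 p.2

theorem mem_arcs (nw : NestedWord Δ) (i j : ℕ) : (i, j) ∈ nw.arcs ↔ nw.rel i j := by
  simp only [NestedWord.arcs, Finset.mem_filter, Finset.mem_product, Finset.mem_Icc]
  constructor
  · exact fun h => h.2
  · intro h
    have := nw.isNest.1 i j h
    have e : nw.len = nw.word.length := rfl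
    exact ⟨by omega, h⟩

theorem arcs_bd (nw : NestedWord Δ) (i j : ℕ) (h : (i, j) ∈ nw.arcs) :
    1 ≤ i ∧ i < j ∧ j ≤ nw.len := nw.isNest.1 i j ((mem_arcs nw i j).1 h)

theorem arcs_nst (nw : NestedWord Δ) : Nst nw.arcs := by
  refine ⟨fun p q h => (arcs_bd nw p q h).2.1, ?_, ?_, ?_⟩
  · intro p q q'; simp only [mem_arcs]; exact nw.isNest.2.1 p q q'
  · intro p p' q; simp only [mem_arcs]; exact nw.isNest.2.2.1 p p' q
  · intro p q p' q'; simp only [mem_arcs]; exact nw.isNest.2.2.2 p q p' q'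

theorem arcs_NN (nw : NestedWord Δ) : nw.arcs ∈ NN 0 nw.len :=
  mem_NN.2 ⟨arcs_nst nw, fun p q h => by have := arcs_bd nw p q h; omega⟩

theorem D2.arcs : D2 (fun (nw : NestedWord Δ) i j => (i, j) ∈ nw.arcs) :=
  D2.rel.congr fun nw i j _ _ _ _ => (mem_arcs nw i j).symm

theorem D1.cll : D1 (fun (nw : NestedWord Δ) i => Cll nw.arcs i) :=
  D2.arcs.ex.congr fun nw i _ _ => by
    constructor
    · rintro ⟨z, _, h⟩; exact ⟨z, h⟩
    · rintro ⟨z, h⟩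
      have := arcs_bd nw _ _ h
      exact ⟨z, Finset.mem_Icc.2 ⟨by omega, by omega⟩, h⟩

theorem D1.intl : D1 (fun (nw : NestedWord Δ) i => Intl nw.arcs i) :=
  (D2.arcs.ex.not.and D2.arcs.swap.ex.not).congr fun nw i _ _ => by
    constructor
    · rintro ⟨h1, h2⟩ p q hpq
      have := arcs_bd nw _ _ hpq
      refine ⟨?_, ?_⟩
      · rintro rfl; exact h1 ⟨q, Finset.mem_Icc.2 ⟨by omega, by omega⟩, hpq⟩
      · rintro rfl; exact h2 ⟨p, Finset.mem_Icc.2 ⟨by omega, by omega⟩, hpq⟩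
    · intro h
      exact ⟨fun ⟨z, _, hz⟩ => (h _ _ hz).1 rfl, fun ⟨z, _, hz⟩ => (h _ _ hz).2 rfl⟩

variable {N : ℕ}

theorem D2.stp (σ : Δ ⊕ Fin N) : D2 (fun (nw : NestedWord Δ) i j => Stp nw.letter nw.arcs σ i j) := by
  rcases σ with a | Y
  · exact (D2.succ.and (D1.intl.snd.and (D1.lab a).snd)).congr fun _ _ _ _ _ _ _ => Iff.rfl
  · refine ((D2.arcs.shift 1).and (D2.arcs.diag 2 (3 + Y)).fst).congr fun nw i j _ _ _ _ => ?_
    constructor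
    · rintro ⟨⟨_, h1⟩, _, _, h2⟩
      exact ⟨h1, by rw [add_assoc]; exact h2⟩
    · rintro ⟨h1, h2⟩
      have b1 := arcs_bd nw _ _ h1
      have b2 := arcs_bd nw _ _ h2
      exact ⟨⟨by omega, h1⟩, by omega, by omega, by rw [add_assoc] at h2; exact h2⟩

theorem D2.chn (r : List (Δ ⊕ Fin N)) :
    D2 (fun (nw : NestedWord Δ) i j => Chn nw.letter nw.arcs r i j) := by
  induction r with
  | nil => exact D2.eq
  | cons σ r ih =>
    refine ((D2.stp σ).comp ih).congr fun nw i j _ _ _ _ => ?_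
    constructor
    · rintro ⟨z, _, h1, h2⟩; exact ⟨z, h1, h2⟩
    · rintro ⟨z, h1, h2⟩
      have l1 := h1.lt (arcs_nst nw)
      have l2 := h2.le (arcs_nst nw)
      exact ⟨z, Finset.mem_Icc.2 ⟨by omega, by omega⟩, h1, h2⟩

theorem D1.both : D1 (fun (nw : NestedWord Δ) k => Cll nw.arcs k ∧ Cll nw.arcs (k + 1)) :=
  (D1.cll.and (D1.cll.shift 1)).congr fun nw i _ _ => by
    constructor
    · exact fun h => ⟨h.1, h.2.2⟩
    · rintro ⟨h1, z, h2⟩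
      have := arcs_bd nw _ _ h2
      exact ⟨h1, by omega, z, h2⟩

theorem D1.frg {K : Type} (X : Fin N) (m : Mono K Δ N) :
    D1 (fun (nw : NestedWord Δ) k => Frg nw.letter nw.arcs k X m) := by
  have A : D2 (fun (nw : NestedWord Δ) k j => k + (2 + X) ≤ nw.len ∧
      ∃ z ∈ Finset.Icc 1 nw.len, Chn nw.letter nw.arcs m.r (k + (2 + X)) z ∧ j = z + 1) :=
    ((D2.chn m.r).comp D2.succ).shift (2 + X)
  refine (((D1.lab m.a0).and (((D1.lab m.a1).shift 1).and (((D1.lab m.a2).shift (2 + X)).and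
    ((D2.arcs.diag 1 (2 + X)).and ((D2.chn (m.p.map Sum.inl : List (Δ ⊕ Fin N))).diag 1 (1 + X)))))).and
    (D2.ex (D2.arcs.and (A.and (D1.lab m.b).snd)))).congr fun nw k hk1 hk2 => ?_
  have e1 : k + (2 + X.val) = k + 2 + X := by omega
  have e2 : k + (1 + X.val) = k + 1 + X := by omega
  rw [e1, e2]
  constructor
  · rintro ⟨⟨h0, ⟨_, h1⟩, ⟨_, h2⟩, ⟨_, _, h3⟩, _, _, h4⟩, j, _, h5, ⟨_, z, _, h6, h7⟩, h8⟩
    refine ⟨j, h5, h3, h0, h1, h4, h2, ?_, h8⟩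
    rw [h7]; exact h6
  · rintro ⟨j, h5, h3, h0, h1, h4, h2, h6, h8⟩
    have b3 := arcs_bd nw _ _ h3
    have b5 := arcs_bd nw _ _ h5
    have l := h6.le (arcs_nst nw)
    exact ⟨⟨h0, ⟨by omega, h1⟩, ⟨by omega, h2⟩, ⟨by omega, by omega, h3⟩, by omega, by omega, h4⟩,
      j, Finset.mem_Icc.2 ⟨by omega, by omega⟩, h5,
      ⟨by omega, j - 1, Finset.mem_Icc.2 ⟨by omega, by omega⟩, h6, by omega⟩, h8⟩

theorem len_pos (nw : NestedWord Δ) : 1 ≤ nw.len := List.length_pos_iff.2 nw.ne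

theorem D0.root (y0 : Fin N) : Dfn 0 (fun (nw : NestedWord Δ) _ =>
    Stp nw.letter nw.arcs (Sum.inr y0 : Δ ⊕ Fin N) 0 nw.len) := by
  refine Dfn.congr (D1.ex (D1.first.and ((D2.arcs.diag 1 (2 + y0)).and
    (D2.ex (D2.arcs.and D1.last.snd))))) fun nw v _ => ?_
  constructor
  · rintro ⟨z, _, rfl, ⟨_, _, h1⟩, j, _, h2, rfl⟩
    refine ⟨h2, ?_⟩
    have e : 0 + 3 + y0.val = 1 + (2 + y0) := by omega
    rw [e]; exact h1
  · rintro ⟨h1, h2⟩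
    have b2 := arcs_bd nw _ _ h2
    have e : 0 + 3 + y0.val = 1 + (2 + y0) := by omega
    rw [e] at h2 b2
    have l := len_pos nw
    exact ⟨1, Finset.mem_Icc.2 ⟨le_rfl, l⟩, rfl, ⟨by omega, by omega, h2⟩, nw.len,
      Finset.mem_Icc.2 ⟨l, le_rfl⟩, h1, rfl⟩

theorem D0.chn (t : List (Δ ⊕ Fin N)) (a : Δ) : Dfn 0 (fun (nw : NestedWord Δ) _ =>
    Chn nw.letter nw.arcs (Sum.inl a :: t) 0 nw.len) := by
  refine Dfn.congr (D1.ex (D1.first.and (D1.intl.and ((D1.lab a).and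
    (D2.ex ((D2.chn t).and D1.last.snd)))))) fun nw v _ => ?_
  constructor
  · rintro ⟨z, _, rfl, h1, h2, j, _, h3, rfl⟩
    exact ⟨1, ⟨rfl, h1, h2⟩, h3⟩
  · rintro ⟨z, ⟨rfl, h1, h2⟩, h3⟩
    have l := len_pos nw
    exact ⟨1, Finset.mem_Icc.2 ⟨le_rfl, l⟩, rfl, h1, h2, nw.len,
      Finset.mem_Icc.2 ⟨l, le_rfl⟩, h3, rfl⟩
end

/-! ### Part E: assembling the sentence -/
section
variable {K Δ : Type} [CommSemiring K]

open Classical in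
theorem weighted_def {k : ℕ} (L : List (K × (NestedWord Δ → (Fin k → ℕ) → Prop)))
    (hL : ∀ t ∈ L, Dfn k t.2) (xs : Fin k → ℕ) :
    ∃ W : WMSO K Δ, AUMSO W ∧ SRMSO W ∧ NoSetQuant W ∧ (∀ z ∈ W.freeF, ∃ i, xs i = z) ∧
      W.freeS = ∅ ∧ ∀ nw γ γ2, (∀ i, γ (xs i) ∈ Finset.Icc 1 nw.len) →
        W.sem nw γ γ2 = (L.map fun t => if t.2 nw (fun i => γ (xs i)) then t.1 else 0).sum := by
  induction L with
  | nil =>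
    exact ⟨.const 0, .const 0, trivial, trivial, by intro z hz; simp [WMSO.freeF] at hz, rfl,
      fun nw γ γ2 _ => rfl⟩
  | cons t L ih =>
    obtain ⟨W, w1, w2, w3, w4, w5, w6⟩ := ih fun t ht => hL t (List.mem_cons_of_mem _ ht)
    obtain ⟨ψ, p1, p2, p3⟩ := hL t List.mem_cons_self xs
    obtain ⟨⟨a, a1, a2⟩, -⟩ := exists_plus_minus K ψ.sz ψ le_rfl p1
    refine ⟨.or (.and (.const t.1) a) W, .or (.and (.const _) (.unamb ⟨ψ, Or.inl a1⟩)) w1,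
      ⟨⟨trivial, a2.sr⟩, w2⟩, ⟨⟨trivial, a2.nsq⟩, w3⟩, ?_, ?_, ?_⟩
    · intro z hz
      simp only [WMSO.freeF, Finset.empty_union, Finset.mem_union] at hz
      rcases hz with hz | hz
      · exact p2 z (a2.fvF hz)
      · exact w4 z hz
    · simp [WMSO.freeS, a2.fvS, w5]
    · intro nw γ γ2 hγ
      simp only [WMSO.sem, List.map_cons, List.sum_cons, w6 nw γ γ2 hγ]
      congr 1
      by_cases h : t.2 nw (fun i => γ (xs i))
      · rw [if_pos h, a2.sem_pos nw γ γ2 ((p3 nw γ hγ).2 h), mul_one]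
      · rw [if_neg h, a2.sem_neg nw γ γ2 (fun h2 => h ((p3 nw γ hγ).1 h2)), mul_zero]

open Classical in
theorem local_formula {N : ℕ} (Q : Fin N → List (Mono K Δ N)) :
    ∃ W : WMSO K Δ, AUMSO W ∧ SRMSO W ∧ NoSetQuant W ∧ W.freeF ⊆ {0} ∧
      W.freeS = ∅ ∧ ∀ nw γ γ2, γ 0 ∈ Finset.Icc 1 nw.len →
        W.sem nw γ γ2 = fw nw.letter Q nw.arcs (γ 0) := by
  let L : List (K × (NestedWord Δ → (Fin 1 → ℕ) → Prop)) :=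
    (1, fun nw v => ¬ (Cll nw.arcs (v 0) ∧ Cll nw.arcs (v 0 + 1))) ::
    (Finset.univ : Finset (Fin N)).toList.flatMap fun X => (Q X).map fun m =>
      (m.c, fun nw v => Frg nw.letter nw.arcs (v 0) X m)
  have hL : ∀ t ∈ L, Dfn 1 t.2 := by
    intro t ht
    simp only [L, List.mem_cons, List.mem_flatMap, List.mem_map] at ht
    rcases ht with rfl | ⟨X, _, m, _, rfl⟩
    · exact D1.both.not
    · exact D1.frg X m
  obtain ⟨W, w1, w2, w3, w4, w5, w6⟩ := weighted_def L hL (fun _ => 0)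
  refine ⟨W, w1, w2, w3, ?_, w5, ?_⟩
  · intro z hz
    obtain ⟨_, h⟩ := w4 z hz
    simp [h.symm]
  · intro nw γ γ2 hγ
    rw [w6 nw γ γ2 (fun _ => hγ)]
    have aux : ∀ M : List (Fin N), ((M.flatMap fun X => (Q X).map fun m =>
        ((m.c, fun nw v => Frg nw.letter nw.arcs (v 0) X m) :
          K × (NestedWord Δ → (Fin 1 → ℕ) → Prop))).map
        fun t => if t.2 nw (fun _ => γ 0) then t.1 else 0).sum =
        (M.map fun X => ((Q X).map fun m =>
          if Frg nw.letter nw.arcs (γ 0) X m then m.c else 0).sum).sum := by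
      intro M
      induction M with
      | nil => rfl
      | cons X M ih =>
        simp only [List.flatMap_cons, List.map_append, List.sum_append, ih, List.map_cons,
          List.sum_cons, List.map_map, Function.comp_def]
    simp only [L, List.map_cons, List.sum_cons]
    rw [aux, Finset.sum_map_toList, fw]
    by_cases h : Cll nw.arcs (γ 0) ∧ Cll nw.arcs (γ 0 + 1)
    · rw [if_neg (not_not.2 h), if_pos h, zero_add]
    · rw [if_pos h, if_neg h, Finset.sum_eq_zero, add_zero]
      intro X _
      apply List.sum_eq_zero
      intro x hx
      obtain ⟨m, _, rfl⟩ := List.mem_map.1 hx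
      rw [if_neg]
      rintro ⟨j, h1, h2, _⟩
      exact h ⟨⟨_, h1⟩, ⟨_, h2⟩⟩

open Classical in
/-- The weight of a nesting. -/
noncomputable def nestW {N : ℕ} (Q : Fin N → List (Mono K Δ N)) (T : List (K × List Δ))
    (y0 : Fin N) (ℓ : ℕ → Δ) (n : ℕ) (s : Finset (ℕ × ℕ)) : K :=
  (if Stp ℓ s (Sum.inr y0 : Δ ⊕ Fin N) 0 n then ∏ k ∈ Finset.Ioc 0 n, fw ℓ Q s k else 0) +
  (T.map fun t => if Chn ℓ s (t.2.map Sum.inl : List (Δ ⊕ Fin N)) 0 n then t.1 else 0).sum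

theorem sentence_exists {N : ℕ} (Q : Fin N → List (Mono K Δ N)) (T : List (K × List Δ))
    (hT : ∀ t ∈ T, t.2 ≠ []) (y0 : Fin N) :
    ∃ φ : WMSO K Δ, SRFO φ ∧ φ.Sentence ∧ ∀ nw γ γ2,
      φ.sem nw γ γ2 = nestW Q T y0 nw.letter nw.len nw.arcs := by
  classical
  obtain ⟨W, w1, w2, w3, w4, w5, w6⟩ := local_formula Q
  obtain ⟨A, -, a2, a3, a4, a5, a6⟩ := weighted_def (K := K) (k := 0)
    [(1, fun (nw : NestedWord Δ) _ => Stp nw.letter nw.arcs (Sum.inr y0 : Δ ⊕ Fin N) 0 nw.len)]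
    (by intro t ht; rw [List.mem_singleton] at ht; subst ht; exact D0.root y0) (fun _ => 0)
  obtain ⟨B, -, b2, b3, b4, b5, b6⟩ := weighted_def (K := K) (k := 0)
    (T.map fun t => (t.1, fun (nw : NestedWord Δ) (_ : Fin 0 → ℕ) =>
      Chn nw.letter nw.arcs (t.2.map Sum.inl : List (Δ ⊕ Fin N)) 0 nw.len))
    (by
      intro t ht
      obtain ⟨⟨c, u⟩, hu, rfl⟩ := List.mem_map.1 ht
      cases u with
      | nil => exact absurd rfl (hT _ hu)
      | cons a u => exact D0.chn _ a) (fun _ => 0)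
  have eA : A.freeF = ∅ := Finset.eq_empty_of_forall_notMem fun z hz => by
    obtain ⟨i, _⟩ := a4 z hz; exact i.elim0
  have eB : B.freeF = ∅ := Finset.eq_empty_of_forall_notMem fun z hz => by
    obtain ⟨i, _⟩ := b4 z hz; exact i.elim0
  refine ⟨.or (.and A (.alF 0 W)) B, ⟨⟨⟨a2, w1, w2⟩, b2⟩, ⟨⟨a3, w3⟩, b3⟩⟩, ⟨?_, ?_⟩, ?_⟩
  · simp only [WMSO.freeF, eA, eB, Finset.empty_union, Finset.union_empty]
    apply Finset.eq_empty_of_forall_notMem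
    intro z hz
    obtain ⟨h1, h2⟩ := Finset.mem_erase.1 hz
    exact h1 (Finset.mem_singleton.1 (w4 h2))
  · simp [WMSO.freeS, a5, b5, w5]
  · intro nw γ γ2
    simp only [WMSO.sem, nestW]
    rw [a6 nw γ γ2 (fun i => i.elim0), b6 nw γ γ2 (fun i => i.elim0)]
    have e : ∏ i ∈ Finset.Icc 1 nw.len, W.sem nw (Function.update γ 0 i) γ2 =
        ∏ k ∈ Finset.Ioc 0 nw.len, fw nw.letter Q nw.arcs k := by
      apply Finset.prod_congr
      · ext z; simp [Nat.succ_le_iff]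
      · intro k hk
        have hk2 : k ∈ Finset.Icc 1 nw.len := by simp at hk ⊢; omega
        rw [w6 nw _ γ2 (by simpa using hk2)]
        simp
    rw [e]
    simp only [List.map_cons, List.map_nil, List.sum_cons, List.sum_nil, add_zero, ite_mul,
      one_mul, zero_mul, List.map_map, Function.comp_def]

theorem chn_sum {N : ℕ} (ℓ : ℕ → Δ) (n : ℕ) (t : List Δ) (c : K) :
    open Classical in ∑ s ∈ NN 0 n, (if Chn ℓ s (t.map Sum.inl : List (Δ ⊕ Fin N)) 0 n then c else 0)
      = if Chn ℓ ∅ (t.map Sum.inl : List (Δ ⊕ Fin N)) 0 n then c else 0 := by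
  classical
  rw [Finset.sum_eq_single (∅ : Finset (ℕ × ℕ))]
  · intro s hs hne
    rw [if_neg]
    intro h
    apply hne
    obtain ⟨h1, h2⟩ := mem_NN.1 hs
    apply Finset.eq_empty_of_forall_notMem
    rintro ⟨p, q⟩ hpq
    have b := h2 p q hpq
    have l := h1.lt p q hpq
    exact (h.intl.2 p b.1 (by omega) p q hpq).1 rfl
  · intro h
    exact absurd (mem_NN.2 ⟨nst_empty, by simp⟩) h

theorem cE_chn {N : ℕ} (ℓ : ℕ → Δ) (n : ℕ) (t : List Δ) (v : Fin N → ℕ → ℕ → K) :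
    open Classical in cE ℓ n v (t.map Sum.inl) 0 n
      = if Chn ℓ ∅ (t.map Sum.inl : List (Δ ⊕ Fin N)) 0 n then 1 else 0 := by
  classical
  have := cE_letters (ℓ := ℓ) (n := n) (v := v) t [] n 0
  rw [List.append_nil] at this
  rw [this]
  by_cases h : t.length = n
  · subst h
    simp [cE]
  · have h1 : ¬ Chn ℓ ∅ (t.map Sum.inl : List (Δ ⊕ Fin N)) 0 n := fun h2 => by
      have := h2.intl.1; omega
    rw [if_neg h1]
    simp [cE, h]

theorem nestW_sum {N : ℕ} (Q : Fin N → List (Mono K Δ N)) (T : List (K × List Δ))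
    (y0 : Fin N) (ℓ : ℕ → Δ) (n : ℕ) :
    ∑ s ∈ NN 0 n, nestW Q T y0 ℓ n s =
      (T.map fun t => t.1 * cE ℓ n (fun (_ : Fin N) _ _ => (0 : K)) (t.2.map Sum.inl) 0 n).sum
        + C1 ℓ Q (Sum.inr y0) 0 n := by
  classical
  simp only [nestW]
  rw [Finset.sum_add_distrib, add_comm]
  congr 1
  induction T with
  | nil => simp
  | cons t T ih =>
    simp only [List.map_cons, List.sum_cons, Finset.sum_add_distrib, ih, cE_chn, chn_sum]
    simp

theorem existsNu_eq (φ : WMSO K Δ) (w : List Δ) (hw : w ≠ []) (G : (ℕ → Δ) → ℕ → Finset (ℕ × ℕ) → K)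
    (hφ : ∀ nw γ γ2, φ.sem nw γ γ2 = G nw.letter nw.len nw.arcs) :
    existsNuSem φ w = ∑ s ∈ NN 0 w.length, G (fun j => w.getD (j - 1) (w.head hw)) w.length s := by
  rw [existsNuSem, ← finsum_mem_coe_finset]
  refine finsum_mem_eq_of_bijOn (s := {nw : NestedWord Δ | nw.word = w})
    (fun nw => nw.arcs) ⟨?_, ?_, ?_⟩ ?_
  · intro nw (h : nw.word = w)
    subst h
    exact arcs_NN nw
  · intro nw (h : nw.word = w) nw' (h' : nw'.word = w) (he : nw.arcs = nw'.arcs)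
    have hr : nw.rel = nw'.rel := by
      funext i j
      apply propext
      rw [← mem_arcs, ← mem_arcs, he]
    cases nw; cases nw'
    simp only at h h' hr
    subst h h' hr
    rfl
  · intro s hs
    obtain ⟨h1, h2⟩ := mem_NN.1 (Finset.mem_coe.1 hs)
    refine ⟨⟨w, hw, fun i j => (i, j) ∈ s, ⟨fun i j h => ?_, h1.fn, ?_, h1.nc⟩⟩, rfl, ?_⟩
    · have := h2 i j h; have := h1.lt i j h; omega
    · intro i i' j; exact h1.inj i i' j
    · ext ⟨i, j⟩
      rw [mem_arcs]
  · intro nw (h : nw.word = w)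
    subst h
    rw [hφ]
    rfl
end

/-- **Proposition (Mathissen).** Every algebraic formal power series is of the
form `⟦∃ν.φ⟧^nest` for some first-order sentence `φ ∈ sRFO(K)` over nested
words. -/
theorem algebraic_is_existsNu_of_sRFO
    (K Δ : Type) [CommSemiring K] (h01 : (0 : K) ≠ 1)
    (S : List Δ → K) (hS : IsAlgebraicSeries K Δ S) :
    ∃ φ : WMSO K Δ, SRFO φ ∧ φ.Sentence ∧ ∀ w, S w = existsNuSem φ w := by
  obtain ⟨hS0, N, Q, T, y0, _, hT, H⟩ := alg_link S hS
  obtain ⟨φ, h1, h2, h3⟩ := sentence_exists Q T hT y0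
  refine ⟨φ, h1, h2, fun w => ?_⟩
  by_cases hw : w = []
  · subst hw
    rw [hS0, existsNuSem]
    symm
    apply finsum_eq_zero_of_forall_eq_zero
    intro nw
    have e : ¬ nw.word = [] := nw.ne
    simp [e]
  · rw [existsNu_eq φ w hw (nestW Q T y0) h3, nestW_sum]
    apply H w hw
    intro i hi
    simp [hi]
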